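/- Let X = A R U be an elliptical random vector in ℝ^d, d ≥ 2, with A a d×d real matrix and R ~ F a positive random variable independent of U. If F(0) = 0, the upper endpoint x_F of F is 1 or ∞, and F ∈ MDA(Λ, w) for some positive scaling function w, then P(‖X‖ > u √λ_(m)) = (1+o(1)) C_* (Γ(d/2)/Γ(m/2)) (2/(u w(u)))^{(d−m)/2} (1 − F(u)) as u ↑ x_F; that is, the ratio of the two sides tends to 1. -/

import Mathlib

open MeasureTheory Filter Topology Matrix ProbabilityTheory

noncomputable section

/-- The Euclidean norm of a vector in `ℝ^d`. -/
def eNorm {d : ℕ} (x : Fin d → ℝ) : ℝ := Real.sqrt (∑ i, x i ^ 2)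

/-- `U` is uniformly distributed on the unit sphere of `ℝ^d`: it takes values in the unit
sphere and its distribution is invariant under orthogonal transformations. -/
def IsUniformOnSphere {Ω : Type*} [MeasurableSpace Ω] (P : Measure Ω) {d : ℕ}
    (U : Ω → Fin d → ℝ) : Prop :=
  Measurable U ∧ (∀ ω, eNorm (U ω) = 1) ∧
    ∀ D : Matrix (Fin d) (Fin d) ℝ, D * Dᵀ = 1 →
      P.map (fun ω => D.mulVec (U ω)) = P.map U

/-- The density of the Beta distribution with parameters `a, b`. -/
def betaPDF (a b x : ℝ) : ℝ :=
  if 0 < x ∧ x < 1 then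
    x ^ (a - 1) * (1 - x) ^ (b - 1) * (Real.Gamma (a + b) / (Real.Gamma a * Real.Gamma b))
  else 0

/-!
Let `L` be the largest eigenvalue. Then `‖X‖ > u √L` holds exactly when the relative deficit
`1 - ‖A U‖² / L` is smaller than the relative excess `1 - u² / R²`. After a rotation of the
uniform vector `U` the deficit is the quadratic form `∑ (1 - λᵢ / L) xᵢ²`, and writing `U` as a
normalized Gaussian vector turns the probability that it is smaller than `q` into the Gaussian
measure of a cone, which is asymptotic to `K q ^ ((d - m) / 2)` as `q ↓ 0`.

Given `R > u`, the Gumbel condition makes the excess, measured in units of `2 / (u w(u))`,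
asymptotically standard exponential, with tails dominated by arbitrarily high powers. An Abelian
argument therefore replaces the mean of `K q ^ p`, `p = (d - m) / 2`, by
`K (2 / (u w(u))) ^ p Γ(p + 1)`, and this `Γ(p + 1)` cancels the one in `K`.
-/

/-- The filter `u ↑ x` on `ℝ`, for an endpoint `x` that may be infinite. -/
def realNhdsLT (x : EReal) : Filter ℝ := comap Real.toEReal (𝓝[<] x)

section RealNhdsLT

variable {x : EReal}

lemma realNhdsLT_top : realNhdsLT ⊤ = atTop := by
  rw [realNhdsLT, ← comap_map EReal.coe_injective (f := atTop), ← EReal.nhdsWithin_top]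
  congr 2
  ext y
  simp [lt_top_iff_ne_top]

lemma realNhdsLT_coe (a : ℝ) : realNhdsLT a = 𝓝[<] a := by
  rw [realNhdsLT, nhdsWithin, comap_inf, ← EReal.isOpenEmbedding_coe.isInducing.nhds_eq_comap,
    comap_principal, nhdsWithin]
  congr 2
  ext y
  simp

instance : (realNhdsLT x).IsCountablyGenerated :=
  inferInstanceAs (comap Real.toEReal (𝓝[<] x)).IsCountablyGenerated

lemma realNhdsLT_hasBasis (hx : ⊥ < x) :
    (realNhdsLT x).HasBasis (fun a : ℝ => (a : EReal) < x)
      fun a => {u | a ≤ u ∧ (u : EReal) < x} := by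
  refine ((nhdsLT_basis_Ico_of_exists_lt ⟨⊥, hx⟩).comap Real.toEReal).to_hasBasis
    (fun a ha => ?_) fun a ha => ⟨a, ha, fun u hu => ⟨EReal.coe_le_coe_iff.1 hu.1, hu.2⟩⟩
  obtain ⟨b, hab, hbx⟩ := EReal.lt_iff_exists_real_btwn.1 ha
  exact ⟨b, hbx, fun u hu => ⟨hab.le.trans (EReal.coe_le_coe_iff.2 hu.1), hu.2⟩⟩

lemma eventually_realNhdsLT_iff (hx : ⊥ < x) {p : ℝ → Prop} :
    (∀ᶠ u in realNhdsLT x, p u) ↔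
      ∃ a : ℝ, (a : EReal) < x ∧ ∀ u, a ≤ u → (u : EReal) < x → p u := by
  simp only [(realNhdsLT_hasBasis hx).eventually_iff, Set.mem_ofPred_eq, and_imp]

lemma eventually_lt_realNhdsLT : ∀ᶠ u : ℝ in realNhdsLT x, (u : EReal) < x :=
  preimage_mem_comap self_mem_nhdsWithin

lemma eventually_ge_realNhdsLT {a : ℝ} (ha : (a : EReal) < x) : ∀ᶠ u in realNhdsLT x, a ≤ u :=
  (eventually_realNhdsLT_iff (bot_le.trans_lt ha)).2 ⟨a, ha, fun _ hu _ => hu⟩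

end RealNhdsLT

/-- `T` has the properties of the survival function of a distribution with upper endpoint `x > 0`
in the Gumbel max-domain of attraction with scaling function `w`. -/
structure IsGumbelTail (T w : ℝ → ℝ) (x : EReal) : Prop where
  antitone : Antitone T
  nonneg : ∀ u, 0 ≤ T u
  isLUB : IsLUB (Real.toEReal '' {u | 0 < T u}) x
  endpoint_pos : 0 < x
  scale_pos : ∀ u, 0 < w u
  tendsto_ratio : ∀ t, Tendsto (fun u => T (u + t / w u) / T u) (realNhdsLT x) (𝓝 (Real.exp (-t)))

namespace IsGumbelTail

variable {T w : ℝ → ℝ} {x : EReal} {u v r p q : ℝ}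

lemma bot_lt (h : IsGumbelTail T w x) : ⊥ < x := EReal.bot_lt_zero.trans h.endpoint_pos

lemma pos (h : IsGumbelTail T w x) (hu : (u : EReal) < x) : 0 < T u := by
  obtain ⟨_, ⟨v, hv, rfl⟩, huv⟩ := (lt_isLUB_iff h.isLUB).1 hu
  exact hv.trans_le (h.antitone (EReal.coe_lt_coe_iff.1 huv).le)

lemma lt_endpoint (h : IsGumbelTail T w x) (huv : u < v) (hv : 0 < T v) : (u : EReal) < x :=
  (EReal.coe_lt_coe_iff.2 huv).trans_le (h.isLUB.1 ⟨v, hv, rfl⟩)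

lemma eventually_pos (h : IsGumbelTail T w x) : ∀ᶠ u in realNhdsLT x, 0 < T u :=
  eventually_lt_realNhdsLT.mono fun _ => h.pos

lemma eventually_arg_pos (h : IsGumbelTail T w x) : ∀ᶠ u in realNhdsLT x, 0 < u := by
  obtain ⟨a, ha, hax⟩ := EReal.lt_iff_exists_real_btwn.1 h.endpoint_pos
  exact (eventually_ge_realNhdsLT hax).mono fun u => (EReal.coe_pos.1 ha).trans_le

lemma lt_shift (h : IsGumbelTail T w x) : u < u + 1 / w u :=
  lt_add_of_pos_right u (one_div_pos.2 (h.scale_pos u))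

lemma eventually_shift_lt (h : IsGumbelTail T w x) (t : ℝ) :
    ∀ᶠ u in realNhdsLT x, ((u + t / w u : ℝ) : EReal) < x := by
  have hratio := (h.tendsto_ratio (t + 1)).eventually (lt_mem_nhds (Real.exp_pos _))
  filter_upwards [hratio] with u hu
  refine h.lt_endpoint (v := u + (t + 1) / w u) ?_ ?_
  · have := h.scale_pos u
    gcongr
    exact lt_add_one t
  · exact (h.nonneg _).lt_of_ne' fun h0 => by simp [h0] at hu

lemma tendsto_shift (h : IsGumbelTail T w x) :
    Tendsto (fun u => u + 1 / w u) (realNhdsLT x) (realNhdsLT x) := by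
  refine (realNhdsLT_hasBasis h.bot_lt).tendsto_right_iff.2 fun a ha => ?_
  filter_upwards [h.eventually_shift_lt 1, eventually_ge_realNhdsLT ha] with u hu hau
  exact ⟨hau.trans h.lt_shift.le, hu⟩

/-- Two unit shifts have ratio `exp (-2)`, so the second one falls short of `u + (1 + r) / w u`. -/
lemma eventually_scale_le (h : IsGumbelTail T w x) (hr : 1 < r) :
    ∀ᶠ u in realNhdsLT x, w u ≤ r * w (u + 1 / w u) := by
  have htwo := ((h.tendsto_ratio 1).comp h.tendsto_shift).mul (h.tendsto_ratio 1)
  have hexp : Real.exp (-(1 + r)) < Real.exp (-1) * Real.exp (-1) := by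
    rw [← Real.exp_add]
    exact Real.exp_lt_exp.2 (by linarith)
  filter_upwards [(h.tendsto_ratio (1 + r)).eventually_lt htwo hexp, h.eventually_pos,
    h.eventually_shift_lt 1] with u hu hTu hv
  simp only [Function.comp_apply] at hu
  rw [div_mul_div_cancel₀ (h.pos hv).ne', div_lt_div_iff_of_pos_right hTu] at hu
  have hlt := h.antitone.reflect_lt hu
  rw [add_div, ← add_assoc, add_lt_add_iff_left,
    div_lt_div_iff₀ (h.scale_pos _) (h.scale_pos _), one_mul] at hlt
  exact hlt.le

lemma eventually_shift_le (h : IsGumbelTail T w x) (hq : Real.exp (-1) < q) :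
    ∀ᶠ u in realNhdsLT x, T (u + 1 / w u) ≤ q * T u := by
  filter_upwards [(h.tendsto_ratio 1).eventually (gt_mem_nhds hq), h.eventually_pos] with u hu hTu
  exact ((div_lt_iff₀ hTu).1 hu).le

lemma shift_le_rpow_of_le_one (h : IsGumbelTail T w x) (hr : 1 < r) (hp : 0 ≤ p) {t : ℝ}
    (ht : 0 ≤ t) (ht1 : t ≤ 1) :
    T (u + t / w u) ≤ r ^ p * (1 + (r - 1) * t) ^ (-p) * T u := by
  have hr0 : 0 < r := zero_lt_one.trans hr
  have hfactor : 1 ≤ r ^ p * (1 + (r - 1) * t) ^ (-p) := by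
    calc 1 = r ^ p * r ^ (-p) := by rw [← Real.rpow_add hr0, add_neg_cancel, Real.rpow_zero]
      _ ≤ r ^ p * (1 + (r - 1) * t) ^ (-p) := by
        gcongr r ^ p * ?_
        exact Real.rpow_le_rpow_of_nonpos (by nlinarith) (by nlinarith) (by linarith)
  calc T (u + t / w u) ≤ T u :=
        h.antitone (le_add_of_nonneg_right (div_nonneg ht (h.scale_pos u).le))
    _ ≤ r ^ p * (1 + (r - 1) * t) ^ (-p) * T u := le_mul_of_one_le_left (h.nonneg u) hfactor

/-- One unit shift costs a factor `r ^ (-p)`, and the remaining shift, measured in the new scale,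
is `s` with `t = 1 + r * s`; the bound is stable because
`r * (1 + (r - 1) * s) = 1 + (r - 1) * (1 + r * s)`. -/
lemma shift_le_rpow_of_forall_ge (h : IsGumbelTail T w x) (hr : 1 < r) (hp : 0 ≤ p) {a : ℝ}
    (ha : ∀ u, a ≤ u → (u : EReal) < x → ((u + 1 / w u : ℝ) : EReal) < x ∧
      w u ≤ r * w (u + 1 / w u) ∧ T (u + 1 / w u) ≤ r ^ (-p) * T u) (n : ℕ) :
    ∀ u, a ≤ u → (u : EReal) < x → ∀ t : ℝ, 0 ≤ t → t ≤ n →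
      T (u + t / w u) ≤ r ^ p * (1 + (r - 1) * t) ^ (-p) * T u := by
  have hr0 : 0 < r := zero_lt_one.trans hr
  induction n with
  | zero =>
    exact fun u _ _ t ht htn =>
      h.shift_le_rpow_of_le_one hr hp ht (htn.trans (by simp))
  | succ n ih =>
    intro u hau hux t ht htn
    rcases le_or_gt t 1 with ht1 | ht1
    · exact h.shift_le_rpow_of_le_one hr hp ht ht1
    obtain ⟨hvx, hscale, hshift⟩ := ha u hau hux
    obtain ⟨s, rfl⟩ : ∃ s, t = 1 + r * s := ⟨(t - 1) / r, by field_simp; ring⟩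
    have hs : 0 ≤ s := nonneg_of_mul_nonneg_right (by linarith) hr0
    have hsn : s ≤ n := by push_cast at htn; nlinarith
    have hbase : 0 ≤ 1 + (r - 1) * s := by nlinarith
    have hpoint : u + 1 / w u + s / w (u + 1 / w u) ≤ u + (1 + r * s) / w u := by
      rw [add_div, ← add_assoc]
      gcongr u + 1 / w u + ?_
      rw [div_le_div_iff₀ (h.scale_pos _) (h.scale_pos _)]
      nlinarith
    calc T (u + (1 + r * s) / w u)
        ≤ T (u + 1 / w u + s / w (u + 1 / w u)) := h.antitone hpoint
      _ ≤ r ^ p * (1 + (r - 1) * s) ^ (-p) * T (u + 1 / w u) :=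
          ih _ (hau.trans h.lt_shift.le) hvx s hs hsn
      _ ≤ r ^ p * (1 + (r - 1) * s) ^ (-p) * (r ^ (-p) * T u) := by gcongr
      _ = r ^ p * (r * (1 + (r - 1) * s)) ^ (-p) * T u := by
          rw [Real.mul_rpow hr0.le hbase]
          ring
      _ = r ^ p * (1 + (r - 1) * (1 + r * s)) ^ (-p) * T u := by ring_nf

lemma exists_shift_le_rpow (h : IsGumbelTail T w x) (hp : 0 < p) :
    ∃ C b : ℝ, 0 < b ∧ ∀ᶠ u in realNhdsLT x, ∀ t, 0 ≤ t →
      T (u + t / w u) ≤ C * (1 + b * t) ^ (-p) * T u := by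
  obtain ⟨r, hr, hrp⟩ : ∃ r : ℝ, 1 < r ∧ r ^ (-p) = Real.exp (-(1 / 2)) := by
    refine ⟨Real.exp (1 / (2 * p)), by rw [Real.one_lt_exp_iff]; positivity, ?_⟩
    rw [← Real.exp_mul]
    congr 1
    field_simp
  have hq : Real.exp (-1) < r ^ (-p) := hrp ▸ Real.exp_lt_exp.2 (by norm_num)
  obtain ⟨a, hax, ha⟩ := (eventually_realNhdsLT_iff h.bot_lt).1
    ((h.eventually_shift_lt 1).and ((h.eventually_scale_le hr).and (h.eventually_shift_le hq)))
  refine ⟨r ^ p, r - 1, sub_pos.2 hr, ?_⟩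
  filter_upwards [eventually_lt_realNhdsLT, eventually_ge_realNhdsLT hax] with u hux hau t ht
  obtain ⟨n, hn⟩ := exists_nat_ge t
  exact h.shift_le_rpow_of_forall_ge hr hp.le ha n u hau hux t ht hn

lemma tendsto_zero (h : IsGumbelTail T w x) : Tendsto T (realNhdsLT x) (𝓝 0) := by
  have hq : Real.exp (-1) < Real.exp (-(1 / 2)) := Real.exp_lt_exp.2 (by norm_num)
  set q := Real.exp (-(1 / 2))
  obtain ⟨a, hax, ha⟩ := (eventually_realNhdsLT_iff h.bot_lt).1
    ((h.eventually_shift_lt 1).and (h.eventually_shift_le hq))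
  have hgeom : ∀ n : ℕ, ∃ u : ℝ, (u : EReal) < x ∧ a ≤ u ∧ T u ≤ q ^ n * T a := by
    intro n
    induction n with
    | zero => exact ⟨a, hax, le_rfl, by simp⟩
    | succ n ih =>
      obtain ⟨u, hux, hau, hTu⟩ := ih
      obtain ⟨hvx, hshift⟩ := ha u hau hux
      refine ⟨_, hvx, hau.trans h.lt_shift.le, hshift.trans ?_⟩
      rw [pow_succ', mul_assoc]
      gcongr
  have hlim : Tendsto (fun n : ℕ => q ^ n * T a) atTop (𝓝 0) := by
    have hq1 : q < 1 := Real.exp_lt_one_iff.2 (by norm_num)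
    exact ((tendsto_pow_atTop_nhds_zero_of_lt_one (Real.exp_pos _).le hq1).mul_const (T a)).trans_eq
      (by rw [zero_mul])
  refine Metric.tendsto_nhds.2 fun e he => ?_
  obtain ⟨n, hn⟩ := (hlim.eventually (gt_mem_nhds he)).exists
  obtain ⟨u, hux, -, hTu⟩ := hgeom n
  filter_upwards [eventually_ge_realNhdsLT hux] with v hv
  rw [Real.dist_eq, sub_zero, abs_of_nonneg (h.nonneg v)]
  exact (h.antitone hv).trans_lt (hTu.trans_lt hn)

/-- If `u * w u ≤ M`, then `u - M / w u ≤ 0`, and `T` does not vanish there while `T u → 0`. -/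
lemma tendsto_mul_scale_atTop (h : IsGumbelTail T w x) :
    Tendsto (fun u => u * w u) (realNhdsLT x) atTop := by
  refine tendsto_atTop.2 fun M => ?_
  have hT0 : 0 < T 0 := h.pos (by simpa using h.endpoint_pos)
  have hprod : Tendsto (fun u => T (u + -M / w u)) (realNhdsLT x) (𝓝 0) := by
    refine (((h.tendsto_ratio (-M)).mul h.tendsto_zero).congr' ?_).trans_eq (by simp)
    filter_upwards [h.eventually_pos] with u hTu
    exact div_mul_cancel₀ _ hTu.ne'
  filter_upwards [hprod.eventually (gt_mem_nhds hT0)] with u hu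
  have hpos := h.antitone.reflect_lt hu
  rw [neg_div, ← sub_eq_add_neg, sub_pos, div_lt_iff₀ (h.scale_pos u)] at hpos
  exact hpos.le

lemma tendsto_two_div_mul_scale (h : IsGumbelTail T w x) :
    Tendsto (fun u => 2 / (u * w u)) (realNhdsLT x) (𝓝 0) :=
  h.tendsto_mul_scale_atTop.const_div_atTop 2

end IsGumbelTail

section ExcessMoments

/-- The survival function of a real random variable. -/
def survival {Ω : Type*} [MeasurableSpace Ω] (P : Measure Ω) (R : Ω → ℝ) (u : ℝ) : ℝ :=
  P.real {ω | u < R ω}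

/-- The relative excess of `ρ²` over the level `u²`. -/
def relExcess (u ρ : ℝ) : ℝ := 1 - u ^ 2 / ρ ^ 2

variable {u ρ y δ p b : ℝ}

@[fun_prop]
lemma measurable_relExcess (u : ℝ) : Measurable (relExcess u) := by
  unfold relExcess
  fun_prop

lemma relExcess_le_one (u ρ : ℝ) : relExcess u ρ ≤ 1 :=
  sub_le_self _ (by positivity)

lemma relExcess_pos (hu : 0 < u) (huρ : u < ρ) : 0 < relExcess u ρ := by
  rw [relExcess, sub_pos, div_lt_one (by nlinarith)]
  gcongr

lemma lt_of_lt_relExcess (hu : 0 < u) (huρ : u < ρ) (hy : 0 ≤ y) (h : y < relExcess u ρ) :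
    u * (1 + y / 2) < ρ := by
  have hρ : 0 < ρ := hu.trans huρ
  have hy1 : y < 1 := h.trans_le (relExcess_le_one u ρ)
  have hsq : u ^ 2 < (1 - y) * ρ ^ 2 := by
    rw [relExcess, lt_sub_comm, div_lt_iff₀ (by positivity)] at h
    exact h
  have hpoly : (1 + y / 2) ^ 2 * (1 - y) ≤ 1 := by nlinarith [sq_nonneg y, pow_nonneg hy 3]
  refine lt_of_pow_lt_pow_left₀ 2 hρ.le ?_
  calc (u * (1 + y / 2)) ^ 2 = (1 + y / 2) ^ 2 * u ^ 2 := by ring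
    _ < (1 + y / 2) ^ 2 * ((1 - y) * ρ ^ 2) := by gcongr
    _ = (1 + y / 2) ^ 2 * (1 - y) * ρ ^ 2 := by ring
    _ ≤ 1 * ρ ^ 2 := by gcongr
    _ = ρ ^ 2 := one_mul _

lemma lt_relExcess_of_lt (hu : 0 < u) (hy : 0 < y) (hδ : 0 < δ) (hyδ : y < δ / (1 + δ))
    (h : u * (1 + y / 2 * (1 + δ)) < ρ) : y < relExcess u ρ := by
  have hρ : 0 < ρ := lt_trans (by positivity) h
  rw [lt_div_iff₀ (by positivity)] at hyδ
  have hy1 : 0 < 1 - y := by nlinarith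
  have hpoly : 1 ≤ (1 - y) * (1 + y / 2 * (1 + δ)) ^ 2 := by
    have hsq : 1 + y * (1 + δ) ≤ (1 + y / 2 * (1 + δ)) ^ 2 := by
      nlinarith [sq_nonneg (y / 2 * (1 + δ))]
    calc 1 ≤ 1 + y * (δ - y * (1 + δ)) := le_add_of_nonneg_right (mul_nonneg hy.le (by linarith))
      _ = (1 - y) * (1 + y * (1 + δ)) := by ring
      _ ≤ (1 - y) * (1 + y / 2 * (1 + δ)) ^ 2 := by gcongr
  rw [relExcess, lt_sub_comm, div_lt_iff₀ (by positivity)]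
  calc u ^ 2 = 1 * u ^ 2 := (one_mul _).symm
    _ ≤ (1 - y) * (1 + y / 2 * (1 + δ)) ^ 2 * u ^ 2 := by gcongr
    _ = (1 - y) * (u * (1 + y / 2 * (1 + δ))) ^ 2 := by ring
    _ < (1 - y) * ρ ^ 2 := by gcongr

lemma integrableOn_rpow_mul_one_add_mul_rpow (hp : 0 < p) (hb : 0 < b) :
    IntegrableOn (fun t : ℝ => t ^ (p - 1) * (1 + b * t) ^ (-(p + 1))) (Set.Ioi 0) := by
  refine mellin_convergent_of_isBigO_scalar (a := p + 1) (b := 0) ?_ ?_ (lt_add_one p) ?_ hp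
  · refine ContinuousOn.locallyIntegrableOn (fun t ht => ?_) measurableSet_Ioi
    have ht0 : 0 < t := ht
    exact (ContinuousAt.rpow_const (by fun_prop) (.inl (by positivity))).continuousWithinAt
  · refine .of_bound (b ^ (-(p + 1))) ((eventually_gt_atTop 0).mono fun t ht => ?_)
    rw [Real.norm_of_nonneg (by positivity), Real.norm_of_nonneg (by positivity),
      ← Real.mul_rpow hb.le ht.le]
    exact Real.rpow_le_rpow_of_nonpos (by positivity) (by linarith) (by linarith)
  · refine .of_bound 1 (eventually_nhdsWithin_of_forall fun t (ht : 0 < t) => ?_)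
    rw [Real.norm_of_nonneg (by positivity), neg_zero, Real.rpow_zero, norm_one, one_mul]
    exact Real.rpow_le_one_of_one_le_of_nonpos (by nlinarith) (by linarith)

variable {Ω : Type*} [MeasurableSpace Ω]

lemma integral_rpow_eq_integral_meas_lt_mul {μ : Measure Ω} [IsFiniteMeasure μ] {f : Ω → ℝ}
    (hf0 : 0 ≤ᵐ[μ] f) (hf : AEMeasurable f μ) (hp : 0 < p) :
    ∫ ω, f ω ^ p ∂μ = p * ∫ t in Set.Ioi (0 : ℝ), μ.real {ω | t < f ω} * t ^ (p - 1) := by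
  have hanti : Antitone fun t => μ.real {ω | t < f ω} :=
    fun s t hst => measureReal_mono fun ω hω => lt_of_le_of_lt hst hω
  have hmeas : Measurable fun t => μ.real {ω | t < f ω} * t ^ (p - 1) :=
    hanti.measurable.mul (by fun_prop)
  rw [integral_eq_lintegral_of_nonneg_ae (hf0.mono fun ω hω => Real.rpow_nonneg hω p)
      (hf.pow_const p).aestronglyMeasurable,
    lintegral_rpow_eq_lintegral_meas_lt_mul μ hf0 hf hp, ENNReal.toReal_mul,
    ENNReal.toReal_ofReal hp.le, integral_eq_lintegral_of_nonneg_ae ?_ hmeas.aestronglyMeasurable]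
  · congr 2
    refine setLIntegral_congr_fun measurableSet_Ioi fun t _ => ?_
    rw [ENNReal.ofReal_mul measureReal_nonneg, ofReal_measureReal]
  · refine ae_restrict_of_forall_mem measurableSet_Ioi fun t ht => ?_
    exact mul_nonneg measureReal_nonneg (Real.rpow_nonneg (le_of_lt ht) _)

variable {P : Measure Ω} [IsFiniteMeasure P] {R : Ω → ℝ} {w : ℝ → ℝ} {x : EReal} {t : ℝ}

lemma mul_one_add_half_threshold (hu : 0 < u) (hw : 0 < w u) (s : ℝ) :
    u * (1 + t * (2 / (u * w u)) / 2 * s) = u + t * s / w u := by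
  field_simp

lemma measureReal_lt_relExcess_le_survival (hu : 0 < u) (hw : 0 < w u) (ht : 0 ≤ t) :
    P.real {ω | u < R ω ∧ t * (2 / (u * w u)) < relExcess u (R ω)} ≤
      survival P R (u + t / w u) := by
  refine measureReal_mono fun ω ⟨hω, hlt⟩ => ?_
  have hlevel := lt_of_lt_relExcess hu hω (by positivity) hlt
  rwa [← mul_one (t * _ / 2), mul_one_add_half_threshold hu hw, mul_one] at hlevel

lemma IsGumbelTail.eventually_survival_le_measureReal_lt_relExcess
    (h : IsGumbelTail (survival P R) w x) (ht : 0 < t) (hδ : 0 < δ) :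
    ∀ᶠ u in realNhdsLT x, survival P R (u + t * (1 + δ) / w u) ≤
      P.real {ω | u < R ω ∧ t * (2 / (u * w u)) < relExcess u (R ω)} := by
  have hsmall : Tendsto (fun u => t * (2 / (u * w u))) (realNhdsLT x) (𝓝 0) := by
    simpa using h.tendsto_two_div_mul_scale.const_mul t
  filter_upwards [h.eventually_arg_pos,
    hsmall.eventually (gt_mem_nhds (by positivity : 0 < δ / (1 + δ)))] with u hu hlt
  have hw := h.scale_pos u
  refine measureReal_mono fun ω (hω : u + t * (1 + δ) / w u < R ω) => ⟨lt_trans ?_ hω, ?_⟩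
  · exact lt_add_of_pos_right u (by positivity)
  · rw [← mul_one_add_half_threshold hu hw] at hω
    exact lt_relExcess_of_lt hu (by positivity) hδ hlt hω

/-- The threshold `t * (2 / (u * w u))` for the relative excess corresponds to the level
`u + t / w u` for `R`, up to a relative error in `t` which vanishes in the limit. -/
lemma IsGumbelTail.tendsto_measureReal_lt_relExcess_div
    (h : IsGumbelTail (survival P R) w x) (ht : 0 < t) :
    Tendsto (fun u => P.real {ω | u < R ω ∧ t * (2 / (u * w u)) < relExcess u (R ω)} /
      survival P R u) (realNhdsLT x) (𝓝 (Real.exp (-t))) := by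
  refine tendsto_order.2 ⟨fun a ha => ?_, fun a ha => ?_⟩
  · have hcont : Tendsto (fun δ : ℝ => Real.exp (-(t * (1 + δ)))) (𝓝[>] 0) (𝓝 (Real.exp (-t))) :=
      ((by fun_prop : Continuous fun δ : ℝ => Real.exp (-(t * (1 + δ)))).tendsto' 0 _
        (by simp)).mono_left nhdsWithin_le_nhds
    obtain ⟨δ, hδa, hδ⟩ := ((hcont.eventually (lt_mem_nhds ha)).and self_mem_nhdsWithin).exists
    filter_upwards [(h.tendsto_ratio (t * (1 + δ))).eventually (lt_mem_nhds hδa),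
      h.eventually_survival_le_measureReal_lt_relExcess ht hδ, h.eventually_pos] with u hu hle hTu
    exact hu.trans_le (by gcongr)
  · filter_upwards [(h.tendsto_ratio t).eventually (gt_mem_nhds ha), h.eventually_arg_pos,
      h.eventually_pos] with u hlt hu hTu
    refine lt_of_le_of_lt ?_ hlt
    gcongr
    exact measureReal_lt_relExcess_le_survival hu (h.scale_pos u) ht.le

lemma IsGumbelTail.tendsto_integral_measureReal_lt_relExcess
    (h : IsGumbelTail (survival P R) w x) (hp : 0 < p) :
    Tendsto (fun u => ∫ t in Set.Ioi (0 : ℝ),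
        P.real {ω | u < R ω ∧ t * (2 / (u * w u)) < relExcess u (R ω)} / survival P R u *
          t ^ (p - 1))
      (realNhdsLT x) (𝓝 (Real.Gamma p)) := by
  obtain ⟨C, b, hb, hdecay⟩ := h.exists_shift_le_rpow (p := p + 1) (by positivity)
  rw [Real.Gamma_eq_integral hp]
  refine tendsto_integral_filter_of_dominated_convergence
    (fun t => C * (t ^ (p - 1) * (1 + b * t) ^ (-(p + 1)))) ?_ ?_
    ((integrableOn_rpow_mul_one_add_mul_rpow hp hb).const_mul C) ?_
  · filter_upwards [h.eventually_arg_pos] with u hu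
    have hanti : Antitone fun t : ℝ =>
        P.real {ω | u < R ω ∧ t * (2 / (u * w u)) < relExcess u (R ω)} := by
      have hw := h.scale_pos u
      refine fun s t hst => measureReal_mono fun ω hω => ⟨hω.1, lt_of_le_of_lt ?_ hω.2⟩
      gcongr
    exact ((hanti.measurable.div_const _).mul (by fun_prop)).aestronglyMeasurable
  · filter_upwards [hdecay, h.eventually_arg_pos, h.eventually_pos] with u hdec hu hTu
    refine ae_restrict_of_forall_mem measurableSet_Ioi fun t (ht : 0 < t) => ?_
    rw [Real.norm_of_nonneg (by positivity), mul_left_comm, mul_comm]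
    gcongr
    rw [div_le_iff₀ hTu]
    exact (measureReal_lt_relExcess_le_survival hu (h.scale_pos u) ht.le).trans (hdec t ht.le)
  · exact ae_restrict_of_forall_mem measurableSet_Ioi fun t ht =>
      (h.tendsto_measureReal_lt_relExcess_div ht).mul_const _

lemma setIntegral_relExcess_rpow (hR : Measurable R) (hu : 0 < u) (hw : 0 < w u) (hp : 0 < p) :
    ∫ ω in {ω | u < R ω}, relExcess u (R ω) ^ p ∂P = (2 / (u * w u)) ^ p * (p *
      ∫ t in Set.Ioi (0 : ℝ),
        P.real {ω | u < R ω ∧ t * (2 / (u * w u)) < relExcess u (R ω)} * t ^ (p - 1)) := by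
  have hε : 0 < 2 / (u * w u) := by positivity
  have hS : MeasurableSet {ω | u < R ω} := measurableSet_lt measurable_const hR
  have hset (t : ℝ) : (P.restrict {ω | u < R ω}).real
        {ω | t < relExcess u (R ω) / (2 / (u * w u))} =
      P.real {ω | u < R ω ∧ t * (2 / (u * w u)) < relExcess u (R ω)} := by
    rw [measureReal_restrict_apply' hS, Set.inter_comm]
    simp only [lt_div_iff₀ hε]
    rfl
  have hscale : ∫ ω in {ω | u < R ω}, relExcess u (R ω) ^ p ∂P = (2 / (u * w u)) ^ p *
      ∫ ω in {ω | u < R ω}, (relExcess u (R ω) / (2 / (u * w u))) ^ p ∂P := by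
    rw [← integral_const_mul]
    refine setIntegral_congr_fun hS fun ω hω => ?_
    rw [← Real.mul_rpow hε.le (div_nonneg (relExcess_pos hu hω).le hε.le), mul_div_cancel₀ _ hε.ne']
  rw [hscale, integral_rpow_eq_integral_meas_lt_mul
    (ae_restrict_of_forall_mem hS fun ω hω => div_nonneg (relExcess_pos hu hω).le hε.le)
    (Measurable.aemeasurable (by fun_prop)) hp]
  simp only [hset]

lemma IsGumbelTail.tendsto_setIntegral_relExcess_rpow (h : IsGumbelTail (survival P R) w x)
    (hR : Measurable R) (hp : 0 ≤ p) :
    Tendsto (fun u => (∫ ω in {ω | u < R ω}, relExcess u (R ω) ^ p ∂P) /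
      ((2 / (u * w u)) ^ p * survival P R u)) (realNhdsLT x) (𝓝 (Real.Gamma (p + 1))) := by
  rcases hp.eq_or_lt with rfl | hp
  · refine tendsto_const_nhds.congr' ?_
    filter_upwards [h.eventually_pos] with u hTu
    simp only [Real.rpow_zero, zero_add, Real.Gamma_one, one_mul, setIntegral_const, smul_eq_mul,
      mul_one]
    exact (div_self hTu.ne').symm
  · rw [Real.Gamma_add_one hp.ne']
    refine ((h.tendsto_integral_measureReal_lt_relExcess hp).const_mul p).congr' ?_
    filter_upwards [h.eventually_arg_pos] with u hu
    have hw := h.scale_pos u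
    rw [setIntegral_relExcess_rpow hR hu hw hp, mul_div_mul_left _ _ (by positivity),
      mul_div_assoc, ← integral_div]
    simp only [div_mul_eq_mul_div]

lemma exists_abs_sub_le_of_tendsto_div_rpow {G : ℝ → ℝ} {B K η : ℝ} (hp : 0 ≤ p)
    (hB : ∀ q, |G q| ≤ B) (hG : Tendsto (fun q => G q / q ^ p) (𝓝[>] 0) (𝓝 K)) (hη : 0 < η) :
    ∃ C, ∀ q, 0 < q → q ≤ 1 → |G q - K * q ^ p| ≤ η * q ^ p + C * q ^ (p + 1) := by
  obtain ⟨q₀, hq₀, hlt⟩ :=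
    mem_nhdsGT_iff_exists_Ioo_subset.1 (Metric.tendsto_nhds.1 hG η hη)
  have hq₀ : 0 < q₀ := hq₀
  have hB0 : 0 ≤ B := (abs_nonneg _).trans (hB 0)
  refine ⟨(B + |K|) / q₀ ^ (p + 1), fun q hq hq1 => ?_⟩
  have hqp : 0 < q ^ p := by positivity
  rcases lt_or_ge q q₀ with hqq | hqq
  · have hclose : |G q / q ^ p - K| ≤ η := le_of_lt (hlt ⟨hq, hqq⟩)
    calc |G q - K * q ^ p| = |G q / q ^ p - K| * q ^ p := by
          nth_rw 3 [← abs_of_pos hqp]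
          rw [← abs_mul, sub_mul, div_mul_cancel₀ _ hqp.ne']
      _ ≤ η * q ^ p := by gcongr
      _ ≤ η * q ^ p + (B + |K|) / q₀ ^ (p + 1) * q ^ (p + 1) :=
          le_add_of_nonneg_right (by positivity)
  · calc |G q - K * q ^ p| ≤ |G q| + |K| * q ^ p := by
          nth_rw 2 [← abs_of_pos hqp]
          rw [← abs_mul]
          exact abs_sub _ _
      _ ≤ B + |K| * 1 := by
          gcongr
          · exact hB q
          · exact Real.rpow_le_one hq.le hq1 hp
      _ = (B + |K|) / q₀ ^ (p + 1) * q₀ ^ (p + 1) := by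
          rw [mul_one, div_mul_cancel₀ _ (by positivity)]
      _ ≤ (B + |K|) / q₀ ^ (p + 1) * q ^ (p + 1) := by gcongr
      _ ≤ η * q ^ p + (B + |K|) / q₀ ^ (p + 1) * q ^ (p + 1) :=
          le_add_of_nonneg_left (by positivity)

lemma abs_setIntegral_relExcess_sub_le (hR : Measurable R) (hu : 0 < u) (hp : 0 ≤ p)
    {G : ℝ → ℝ} {B C K η : ℝ} (hGm : Measurable G) (hB : ∀ q, |G q| ≤ B)
    (hG : ∀ q, 0 < q → q ≤ 1 → |G q - K * q ^ p| ≤ η * q ^ p + C * q ^ (p + 1)) :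
    |(∫ ω in {ω | u < R ω}, G (relExcess u (R ω)) ∂P) -
        K * ∫ ω in {ω | u < R ω}, relExcess u (R ω) ^ p ∂P| ≤
      η * (∫ ω in {ω | u < R ω}, relExcess u (R ω) ^ p ∂P) +
        C * ∫ ω in {ω | u < R ω}, relExcess u (R ω) ^ (p + 1) ∂P := by
  have hS : MeasurableSet {ω | u < R ω} := measurableSet_lt measurable_const hR
  have hGint : IntegrableOn (fun ω => G (relExcess u (R ω))) {ω | u < R ω} P :=
    .of_bound (measure_lt_top _ _) (hGm.comp (by fun_prop)).aestronglyMeasurable B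
      (ae_of_all _ fun ω => hB _)
  have hrpow (s : ℝ) (hs : 0 ≤ s) :
      IntegrableOn (fun ω => relExcess u (R ω) ^ s) {ω | u < R ω} P := by
    refine .of_bound (measure_lt_top _ _) (Measurable.aestronglyMeasurable (by fun_prop)) 1
      (ae_restrict_of_forall_mem hS fun ω hω => ?_)
    have hpos := relExcess_pos hu hω
    rw [Real.norm_of_nonneg (by positivity)]
    exact Real.rpow_le_one hpos.le (relExcess_le_one u _) hs
  have hbound := ((hrpow p hp).const_mul η).add ((hrpow (p + 1) (by positivity)).const_mul C)
  rw [← integral_const_mul, ← integral_const_mul, ← integral_const_mul,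
    ← integral_sub hGint ((hrpow p hp).const_mul K),
    ← integral_add ((hrpow p hp).const_mul η) ((hrpow (p + 1) (by positivity)).const_mul C)]
  refine abs_integral_le_integral_abs.trans (integral_mono_of_nonneg
    (ae_of_all _ fun ω => abs_nonneg _) hbound (ae_restrict_of_forall_mem hS fun ω hω => ?_))
  exact hG _ (relExcess_pos hu hω) (relExcess_le_one u _)

lemma IsGumbelTail.tendsto_setIntegral_relExcess (h : IsGumbelTail (survival P R) w x)
    (hR : Measurable R) (hp : 0 ≤ p) {G : ℝ → ℝ} {B K : ℝ} (hGm : Measurable G)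
    (hB : ∀ q, |G q| ≤ B) (hG : Tendsto (fun q => G q / q ^ p) (𝓝[>] 0) (𝓝 K)) :
    Tendsto (fun u => (∫ ω in {ω | u < R ω}, G (relExcess u (R ω)) ∂P) /
      ((2 / (u * w u)) ^ p * survival P R u)) (realNhdsLT x) (𝓝 (K * Real.Gamma (p + 1))) := by
  set I : ℝ → ℝ := fun u => (∫ ω in {ω | u < R ω}, G (relExcess u (R ω)) ∂P) /
    ((2 / (u * w u)) ^ p * survival P R u)
  set J : ℝ → ℝ → ℝ := fun s u => (∫ ω in {ω | u < R ω}, relExcess u (R ω) ^ s ∂P) /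
    ((2 / (u * w u)) ^ s * survival P R u)
  have hJ (s : ℝ) (hs : 0 ≤ s) : Tendsto (J s) (realNhdsLT x) (𝓝 (Real.Gamma (s + 1))) :=
    h.tendsto_setIntegral_relExcess_rpow hR hs
  have hΓ : 0 < Real.Gamma (p + 1) := Real.Gamma_pos_of_pos (by positivity)
  suffices hdiff : Tendsto (fun u => I u - K * J p u) (realNhdsLT x) (𝓝 0) by
    simpa using hdiff.add ((hJ p hp).const_mul K)
  refine Metric.tendsto_nhds.2 fun e he => ?_
  obtain ⟨η, hη, hηe⟩ : ∃ η, 0 < η ∧ η * Real.Gamma (p + 1) < e := by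
    refine ⟨e / 2 / Real.Gamma (p + 1), by positivity, ?_⟩
    rw [div_mul_cancel₀ _ hΓ.ne']
    exact half_lt_self he
  obtain ⟨C, hC⟩ := exists_abs_sub_le_of_tendsto_div_rpow hp hB hG hη
  have hbound : Tendsto (fun u => η * J p u + C * (2 / (u * w u)) * J (p + 1) u)
      (realNhdsLT x) (𝓝 (η * Real.Gamma (p + 1))) := by
    simpa using ((hJ p hp).const_mul η).add
      ((h.tendsto_two_div_mul_scale.const_mul C).mul (hJ (p + 1) (by positivity)))
  filter_upwards [hbound.eventually (gt_mem_nhds hηe), h.eventually_arg_pos, h.eventually_pos]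
    with u hlt hu hTu
  have hε : 0 < 2 / (u * w u) := have := h.scale_pos u; by positivity
  rw [Real.dist_eq, sub_zero]
  refine lt_of_le_of_lt ?_ hlt
  have hle := abs_setIntegral_relExcess_sub_le hR hu hp hGm hB hC (P := P)
  have hden : 0 < (2 / (u * w u)) ^ p * survival P R u := by positivity
  calc |I u - K * J p u| = |(∫ ω in {ω | u < R ω}, G (relExcess u (R ω)) ∂P) -
        K * ∫ ω in {ω | u < R ω}, relExcess u (R ω) ^ p ∂P| /
        ((2 / (u * w u)) ^ p * survival P R u) := by
        nth_rw 1 [← abs_of_pos hden]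
        rw [← abs_div, sub_div, mul_div_assoc]
    _ ≤ _ := div_le_div_of_nonneg_right hle hden.le
    _ = η * J p u + C * (2 / (u * w u)) * J (p + 1) u := by
        simp only [J]
        generalize 2 / (u * w u) = ε at hε
        rw [Real.rpow_add_one hε.ne']
        field_simp

end ExcessMoments

section Cones

lemma measurableSet_norm_snd_lt_norm_fst {E F : Type*} [SeminormedAddCommGroup E]
    [MeasurableSpace E] [OpensMeasurableSpace E] [SeminormedAddCommGroup F] [MeasurableSpace F]
    [OpensMeasurableSpace F] : MeasurableSet {z : E × F | ‖z.2‖ < ‖z.1‖} :=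
  measurableSet_lt (by fun_prop) (by fun_prop)

variable {E F : Type*} [NormedAddCommGroup E] [InnerProductSpace ℝ E] [FiniteDimensional ℝ E]
  [MeasurableSpace E] [BorelSpace E] [NormedAddCommGroup F] [InnerProductSpace ℝ F]
  [FiniteDimensional ℝ F] [MeasurableSpace F] [BorelSpace F]

lemma integrable_exp_neg_mul_norm_sq {b : ℝ} (hb : 0 < b) :
    Integrable fun x : E => Real.exp (-b * ‖x‖ ^ 2) := by
  refine not_imp_comm.1 integral_undef ?_
  rw [GaussianFourier.integral_rexp_neg_mul_sq_norm hb]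
  positivity

lemma volume_real_ball (x : E) {r : ℝ} (hr : 0 < r) :
    volume.real (Metric.ball x r) =
      r ^ Module.finrank ℝ E *
        (√Real.pi ^ Module.finrank ℝ E / Real.Gamma (Module.finrank ℝ E / 2 + 1)) := by
  rcases subsingleton_or_nontrivial E with hE | hE
  · have hball : Metric.ball x r = Set.univ :=
      Set.eq_univ_of_forall fun y => by simpa [Subsingleton.elim y x]
    have hgauss := GaussianFourier.integral_rexp_neg_mul_sq_norm (V := E) one_pos
    simpa [hball, Module.finrank_zero_of_subsingleton, norm_of_subsingleton] using hgauss
  · rw [measureReal_def, InnerProductSpace.volume_ball, ENNReal.toReal_mul, ENNReal.toReal_pow,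
      ENNReal.toReal_ofReal hr.le, ENNReal.toReal_ofReal (by positivity)]

lemma integral_exp_neg_norm_sq_mul_norm_pow [Nontrivial E] (k : ℕ) :
    ∫ x : E, Real.exp (-‖x‖ ^ 2) * ‖x‖ ^ k =
      √Real.pi ^ Module.finrank ℝ E * Real.Gamma ((Module.finrank ℝ E + k) / 2) /
        Real.Gamma (Module.finrank ℝ E / 2) := by
  set n := Module.finrank ℝ E with hn
  have hn0 : 0 < n := Module.finrank_pos
  have hn0' : (0 : ℝ) < n := Nat.cast_pos.2 hn0
  have hradial : ∫ y in Set.Ioi (0 : ℝ), y ^ (n - 1) • (Real.exp (-y ^ 2) * y ^ k) =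
      1 / 2 * Real.Gamma ((n + k) / 2) := by
    calc ∫ y in Set.Ioi (0 : ℝ), y ^ (n - 1) • (Real.exp (-y ^ 2) * y ^ k)
      _ = ∫ y in Set.Ioi (0 : ℝ), y ^ ((n : ℝ) - 1 + k) * Real.exp (-y ^ (2 : ℝ)) := by
        refine setIntegral_congr_fun measurableSet_Ioi fun y (hy : 0 < y) => ?_
        rw [Real.rpow_add hy, Real.rpow_natCast, ← Nat.cast_pred hn0, Real.rpow_natCast,
          Real.rpow_two, smul_eq_mul]
        ring
      _ = 1 / 2 * Real.Gamma (((n : ℝ) - 1 + k + 1) / 2) :=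
        integral_rpow_mul_exp_neg_rpow two_pos (by linarith [k.cast_nonneg (α := ℝ)])
      _ = 1 / 2 * Real.Gamma ((n + k) / 2) := by congr 3; ring
  have hΓ : Real.Gamma (n / 2) ≠ 0 := by positivity
  rw [integral_fun_norm_addHaar volume fun y : ℝ => Real.exp (-y ^ 2) * y ^ k, hradial,
    volume_real_ball 0 one_pos, ← hn, one_pow, one_mul, Real.Gamma_add_one (by positivity)]
  simp only [nsmul_eq_mul, smul_eq_mul]
  field_simp

lemma integrableOn_exp_neg_norm_fst_sq :
    IntegrableOn (fun z : E × F => Real.exp (-‖z.1‖ ^ 2)) {z | ‖z.2‖ < ‖z.1‖} := by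
  have hprod : Integrable fun z : E × F =>
      Real.exp (-(1 / 2) * ‖z.1‖ ^ 2) * Real.exp (-(1 / 2) * ‖z.2‖ ^ 2) :=
    (integrable_exp_neg_mul_norm_sq one_half_pos).mul_prod
      (integrable_exp_neg_mul_norm_sq one_half_pos)
  refine hprod.integrableOn.mono' (by fun_prop) <|
    ae_restrict_of_forall_mem measurableSet_norm_snd_lt_norm_fst fun z hz => ?_
  have hsq : ‖z.2‖ ^ 2 < ‖z.1‖ ^ 2 := pow_lt_pow_left₀ hz (norm_nonneg _) two_ne_zero
  rw [Real.norm_of_nonneg (Real.exp_nonneg _), ← Real.exp_add, Real.exp_le_exp]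
  linarith

lemma setIntegral_exp_neg_norm_fst_sq [Nontrivial E] :
    ∫ z : E × F in {z | ‖z.2‖ < ‖z.1‖}, Real.exp (-‖z.1‖ ^ 2) =
      √Real.pi ^ (Module.finrank ℝ E + Module.finrank ℝ F) *
        Real.Gamma ((Module.finrank ℝ E + Module.finrank ℝ F) / 2) /
        (Real.Gamma (Module.finrank ℝ E / 2) * Real.Gamma (Module.finrank ℝ F / 2 + 1)) := by
  have hslice : ∀ᵐ x : E, ∫ y : F, {z : E × F | ‖z.2‖ < ‖z.1‖}.indicator
        (fun z => Real.exp (-‖z.1‖ ^ 2)) (x, y) =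
      Real.exp (-‖x‖ ^ 2) * ‖x‖ ^ Module.finrank ℝ F *
        (√Real.pi ^ Module.finrank ℝ F / Real.Gamma (Module.finrank ℝ F / 2 + 1)) := by
    filter_upwards [Measure.ae_ne volume (0 : E)] with x hx
    have hball : (fun y : F => {z : E × F | ‖z.2‖ < ‖z.1‖}.indicator
        (fun z => Real.exp (-‖z.1‖ ^ 2)) (x, y)) =
        (Metric.ball 0 ‖x‖).indicator fun _ => Real.exp (-‖x‖ ^ 2) := by
      ext y
      simp [Set.indicator]
    rw [hball, integral_indicator_const _ Metric.isOpen_ball.measurableSet,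
      volume_real_ball 0 (norm_pos_iff.2 hx), smul_eq_mul]
    ring
  rw [← integral_indicator measurableSet_norm_snd_lt_norm_fst, Measure.volume_eq_prod,
    integral_prod _ (integrableOn_exp_neg_norm_fst_sq.integrable_indicator
      measurableSet_norm_snd_lt_norm_fst), integral_congr_ae hslice, integral_mul_const,
    integral_exp_neg_norm_sq_mul_norm_pow, pow_add]
  ring

variable {I J : Type*}

lemma measurableEmbedding_prodMap_toLp :
    MeasurableEmbedding (Prod.map (WithLp.toLp 2 : (I → ℝ) → _) (WithLp.toLp 2 : (J → ℝ) → _)) :=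
  (MeasurableEquiv.toLp 2 _).measurableEmbedding.prodMap
    (MeasurableEquiv.toLp 2 _).measurableEmbedding

variable [Fintype I] [Fintype J]

lemma measurePreserving_prodMap_toLp :
    MeasurePreserving (Prod.map (WithLp.toLp 2 : (I → ℝ) → _) (WithLp.toLp 2 : (J → ℝ) → _)) :=
  (PiLp.volume_preserving_toLp I).prod (PiLp.volume_preserving_toLp J)

lemma preimage_norm_snd_lt_norm_fst :
    Prod.map (WithLp.toLp 2 : (I → ℝ) → _) (WithLp.toLp 2 : (J → ℝ) → _) ⁻¹'
      {z | ‖z.2‖ < ‖z.1‖} = {z | ∑ j, z.2 j ^ 2 < ∑ i, z.1 i ^ 2} := by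
  ext z
  simp [EuclideanSpace.norm_eq, Real.sqrt_lt_sqrt_iff, Finset.sum_nonneg, sq_nonneg]

lemma integrableOn_exp_neg_sum_sq_fst :
    IntegrableOn (fun z : (I → ℝ) × (J → ℝ) => Real.exp (-∑ i, z.1 i ^ 2))
      {z | ∑ j, z.2 j ^ 2 < ∑ i, z.1 i ^ 2} := by
  have h := (measurePreserving_prodMap_toLp.integrableOn_comp_preimage
    measurableEmbedding_prodMap_toLp).2
    (integrableOn_exp_neg_norm_fst_sq (E := EuclideanSpace ℝ I) (F := EuclideanSpace ℝ J))
  rw [preimage_norm_snd_lt_norm_fst] at h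
  simpa [Function.comp_def, EuclideanSpace.real_norm_sq_eq] using h

lemma setIntegral_exp_neg_sum_sq_fst [Nonempty I] :
    ∫ z : (I → ℝ) × (J → ℝ) in {z | ∑ j, z.2 j ^ 2 < ∑ i, z.1 i ^ 2},
        Real.exp (-∑ i, z.1 i ^ 2) =
      √Real.pi ^ (Fintype.card I + Fintype.card J) *
        Real.Gamma ((Fintype.card I + Fintype.card J) / 2) /
        (Real.Gamma (Fintype.card I / 2) * Real.Gamma (Fintype.card J / 2 + 1)) := by
  have h := measurePreserving_prodMap_toLp.setIntegral_preimage_emb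
    measurableEmbedding_prodMap_toLp
    (fun z : EuclideanSpace ℝ I × EuclideanSpace ℝ J => Real.exp (-‖z.1‖ ^ 2)) {z | ‖z.2‖ < ‖z.1‖}
  rw [preimage_norm_snd_lt_norm_fst, setIntegral_exp_neg_norm_fst_sq] at h
  simpa [EuclideanSpace.real_norm_sq_eq] using h

/-- The integral of `exp (-‖·‖²)` over the cone `∑ c_j y_j² < q ‖(x, y)‖²` of `ℝ^I × ℝ^J`. -/
def gaussianCone (I : Type*) [Fintype I] (c : J → ℝ) (q : ℝ) : ℝ :=
  ∫ z : (I → ℝ) × (J → ℝ) in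
    {z | ∑ j, c j * z.2 j ^ 2 < q * (∑ i, z.1 i ^ 2 + ∑ j, z.2 j ^ 2)},
    Real.exp (-(∑ i, z.1 i ^ 2 + ∑ j, z.2 j ^ 2))

lemma smul_map_mul_left_volume_pi {s : J → ℝ} (hs : ∀ j, 0 < s j) :
    ENNReal.ofReal (∏ j, s j) • Measure.map (s * ·) volume = (volume : Measure (J → ℝ)) := by
  classical
  have hpos : 0 < ∏ j, s j := Finset.prod_pos fun j _ => hs j
  have hdiag : ⇑(toLin' (diagonal s)) = (s * ·) := by
    ext y j
    simp [mulVec_diagonal]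
  have h := Real.smul_map_diagonal_volume_pi (D := s) (by rw [det_diagonal]; exact hpos.ne')
  rwa [det_diagonal, abs_of_pos hpos, hdiag] at h

lemma setIntegral_eq_prod_mul_setIntegral_mul_snd {s : J → ℝ} (hs : ∀ j, 0 < s j)
    {S : Set ((I → ℝ) × (J → ℝ))} (hS : MeasurableSet S)
    {f : (I → ℝ) × (J → ℝ) → ℝ} (hf : Measurable f) :
    ∫ z in S, f z = (∏ j, s j) * ∫ z in Prod.map id (s * ·) ⁻¹' S, f (z.1, s * z.2) := by
  have hvol : (volume : Measure ((I → ℝ) × (J → ℝ))) =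
      ENNReal.ofReal (∏ j, s j) • Measure.map (Prod.map id (s * ·)) volume := by
    rw [Measure.volume_eq_prod, ← Measure.map_prod_map _ _ measurable_id (by fun_prop),
      Measure.map_id, ← Measure.prod_smul_right, smul_map_mul_left_volume_pi hs]
  conv_lhs => rw [hvol]
  rw [Measure.restrict_smul, integral_smul_measure,
    ENNReal.toReal_ofReal (Finset.prod_pos fun j _ => hs j).le, smul_eq_mul,
    setIntegral_map hS hf.aestronglyMeasurable (by fun_prop)]
  rfl

/-- For `q < min c` the cone of `gaussianCone` is `∑ (c_j - q) y_j² < q ‖x‖²`, which rescaling the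
`y_j` turns into a cone that does not depend on `q`. -/
lemma gaussianCone_eq {c : J → ℝ} {q : ℝ} (hq : 0 < q) (hqc : ∀ j, q < c j) :
    gaussianCone I c q = (∏ j, √(q / (c j - q))) *
      ∫ z : (I → ℝ) × (J → ℝ) in {z | ∑ j, z.2 j ^ 2 < ∑ i, z.1 i ^ 2},
        Real.exp (-(∑ i, z.1 i ^ 2 + ∑ j, q / (c j - q) * z.2 j ^ 2)) := by
  have hcq : ∀ j, 0 < c j - q := fun j => sub_pos.2 (hqc j)
  have hsq : ∀ j, √(q / (c j - q)) ^ 2 = q / (c j - q) := fun j =>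
    Real.sq_sqrt (div_pos hq (hcq j)).le
  rw [gaussianCone, setIntegral_eq_prod_mul_setIntegral_mul_snd
    (fun j => Real.sqrt_pos.2 (div_pos hq (hcq j)))
    (measurableSet_lt (by fun_prop) (by fun_prop)) (by fun_prop)]
  congr 2
  · congr 1
    ext z
    have hsum : ∑ j, c j * (√(q / (c j - q)) * z.2 j) ^ 2 -
        q * ∑ j, (√(q / (c j - q)) * z.2 j) ^ 2 = q * ∑ j, z.2 j ^ 2 := by
      rw [Finset.mul_sum, Finset.mul_sum, ← Finset.sum_sub_distrib]
      refine Finset.sum_congr rfl fun j _ => ?_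
      have := (hcq j).ne'
      rw [mul_pow, hsq]
      field_simp
    simp only [Set.mem_preimage, Set.mem_ofPred_eq, Prod.map_fst, Prod.map_snd, id, Pi.mul_apply]
    rw [mul_add, ← sub_lt_iff_lt_add, hsum, mul_lt_mul_iff_right₀ hq]
  · simp only [Pi.mul_apply, mul_pow, hsq]

lemma eventually_pos_and_forall_lt {ι : Type*} [Finite ι] {c : ι → ℝ} (hc : ∀ i, 0 < c i) :
    ∀ᶠ q in 𝓝[>] (0 : ℝ), 0 < q ∧ ∀ i, q < c i :=
  (eventually_nhdsWithin_of_forall fun _ => id).and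
    (nhdsWithin_le_nhds (eventually_all.2 fun i => gt_mem_nhds (hc i)))

lemma tendsto_prod_sqrt_div_sub_div_rpow {c : J → ℝ} (hc : ∀ j, 0 < c j) :
    Tendsto (fun q => (∏ j, √(q / (c j - q))) / q ^ (Fintype.card J / 2 : ℝ)) (𝓝[>] 0)
      (𝓝 (∏ j, c j ^ (-(1 / 2) : ℝ))) := by
  have hlim : Tendsto (fun q : ℝ => ∏ j, (c j - q) ^ (-(1 / 2) : ℝ)) (𝓝 0)
      (𝓝 (∏ j, (c j - 0) ^ (-(1 / 2) : ℝ))) :=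
    tendsto_finsetProd _ fun j _ => (tendsto_const_nhds.sub tendsto_id).rpow_const
      (.inl (by simpa using (hc j).ne'))
  simp only [sub_zero] at hlim
  refine (hlim.mono_left nhdsWithin_le_nhds).congr' ?_
  filter_upwards [eventually_pos_and_forall_lt hc] with q ⟨hq, hqc⟩
  have hpow : q ^ (Fintype.card J / 2 : ℝ) = ∏ _j : J, q ^ (1 / 2 : ℝ) := by
    rw [Finset.prod_const, Finset.card_univ, ← Real.rpow_natCast, ← Real.rpow_mul hq.le]
    congr 1
    ring
  rw [hpow, ← Finset.prod_div_distrib]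
  refine Finset.prod_congr rfl fun j _ => ?_
  have hcq : 0 < c j - q := sub_pos.2 (hqc j)
  rw [Real.sqrt_eq_rpow, Real.div_rpow hq.le hcq.le, Real.rpow_neg hcq.le]
  field_simp

lemma tendsto_setIntegral_exp_neg_sum_sq {c : J → ℝ} (hc : ∀ j, 0 < c j) :
    Tendsto (fun q => ∫ z : (I → ℝ) × (J → ℝ) in {z | ∑ j, z.2 j ^ 2 < ∑ i, z.1 i ^ 2},
        Real.exp (-(∑ i, z.1 i ^ 2 + ∑ j, q / (c j - q) * z.2 j ^ 2))) (𝓝[>] 0)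
      (𝓝 (∫ z : (I → ℝ) × (J → ℝ) in {z | ∑ j, z.2 j ^ 2 < ∑ i, z.1 i ^ 2},
        Real.exp (-∑ i, z.1 i ^ 2))) := by
  refine tendsto_integral_filter_of_dominated_convergence _
    (.of_forall fun q => (by fun_prop)) ?_ integrableOn_exp_neg_sum_sq_fst
    (ae_of_all _ fun z => ?_)
  · filter_upwards [eventually_pos_and_forall_lt hc] with q ⟨hq, hqc⟩
    refine ae_of_all _ fun z => ?_
    have hnonneg : 0 ≤ ∑ j, q / (c j - q) * z.2 j ^ 2 := Finset.sum_nonneg fun j _ =>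
      mul_nonneg (div_nonneg hq.le (sub_pos.2 (hqc j)).le) (sq_nonneg _)
    rw [Real.norm_of_nonneg (Real.exp_nonneg _), Real.exp_le_exp]
    linarith
  · have hlim : Tendsto (fun q => ∑ j, q / (c j - q) * z.2 j ^ 2) (𝓝 0)
        (𝓝 (∑ j, 0 / (c j - 0) * z.2 j ^ 2)) :=
      tendsto_finsetSum _ fun j _ => (tendsto_id.div (tendsto_const_nhds.sub tendsto_id)
        (by simpa using (hc j).ne')).mul_const _
    simp only [zero_div, zero_mul, Finset.sum_const_zero] at hlim
    simpa using ((hlim.const_add (∑ i, z.1 i ^ 2)).neg.rexp).mono_left nhdsWithin_le_nhds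

lemma tendsto_gaussianCone_div_rpow [Nonempty I] {c : J → ℝ} (hc : ∀ j, 0 < c j) :
    Tendsto (fun q => gaussianCone I c q / q ^ (Fintype.card J / 2 : ℝ)) (𝓝[>] 0)
      (𝓝 ((∏ j, c j ^ (-(1 / 2) : ℝ)) * (√Real.pi ^ (Fintype.card I + Fintype.card J) *
        Real.Gamma ((Fintype.card I + Fintype.card J) / 2) /
        (Real.Gamma (Fintype.card I / 2) * Real.Gamma (Fintype.card J / 2 + 1))))) := by
  rw [← setIntegral_exp_neg_sum_sq_fst]
  refine ((tendsto_prod_sqrt_div_sub_div_rpow hc).mul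
    (tendsto_setIntegral_exp_neg_sum_sq hc)).congr' ?_
  filter_upwards [eventually_pos_and_forall_lt hc] with q ⟨hq, hqc⟩
  rw [gaussianCone_eq hq hqc]
  ring

end Cones

section SphereUniform

variable {E : Type*} [NormedAddCommGroup E] [InnerProductSpace ℝ E] [FiniteDimensional ℝ E]
  [MeasurableSpace E] [BorelSpace E] {μ ν : Measure E}

/-- The uniform distribution on the unit sphere of `E`, as the isometry-invariant probability
measure carried by the sphere. -/
structure IsSphereUniform (μ : Measure E) : Prop where
  isProbabilityMeasure : IsProbabilityMeasure μ
  map_isometry (L : E ≃ₗᵢ[ℝ] E) : μ.map L = μ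
  ae_norm_eq_one : ∀ᵐ x ∂μ, ‖x‖ = 1

namespace IsSphereUniform

lemma charFun_eq_of_norm_eq (hμ : IsSphereUniform μ) {s t : E} (hst : ‖s‖ = ‖t‖) :
    charFun μ s = charFun μ t := by
  set L := (ℝ ∙ (s - t))ᗮ.reflection
  have hL : L s = t := Submodule.reflection_sub hst
  conv_rhs => rw [← hμ.map_isometry L]
  rw [charFun_apply, charFun_apply, integral_map L.continuous.measurable.aemeasurable (by fun_prop)]
  simp_rw [← hL, L.inner_map_map]

lemma charFun_eq_integral_integral (hμ : IsSphereUniform μ) (hν : IsSphereUniform ν) (t : E) :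
    charFun μ t = ∫ v, ∫ u, Complex.exp ((‖t‖ * inner ℝ u v : ℝ) * Complex.I) ∂μ ∂ν := by
  have := hν.isProbabilityMeasure
  have hinner : ∀ᵐ v ∂ν,
      ∫ u, Complex.exp ((‖t‖ * inner ℝ u v : ℝ) * Complex.I) ∂μ = charFun μ t := by
    filter_upwards [hν.ae_norm_eq_one] with v hv
    rw [hμ.charFun_eq_of_norm_eq (t := ‖t‖ • v) (by simp [norm_smul, hv]), charFun_apply]
    simp_rw [inner_smul_right]
  rw [integral_congr_ae hinner, integral_const, probReal_univ, one_smul]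

protected lemma eq (hμ : IsSphereUniform μ) (hν : IsSphereUniform ν) : μ = ν := by
  have := hμ.isProbabilityMeasure
  have := hν.isProbabilityMeasure
  refine Measure.ext_of_charFun (funext fun t => ?_)
  rw [hμ.charFun_eq_integral_integral hν, hν.charFun_eq_integral_integral hμ,
    integral_integral_swap]
  · simp_rw [real_inner_comm]
  · refine Integrable.of_bound (Continuous.aestronglyMeasurable ?_) 1 (ae_of_all _ fun z => ?_)
    · simp only [Function.uncurry_def]
      fun_prop
    · rw [Function.uncurry_def, Complex.norm_exp_ofReal_mul_I]

end IsSphereUniform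

/-- The rotation-invariant Gaussian probability measure on `E` with density proportional to
`exp (-‖x‖²)`. -/
def radialGaussian (E : Type*) [NormedAddCommGroup E] [InnerProductSpace ℝ E]
    [FiniteDimensional ℝ E] [MeasurableSpace E] [BorelSpace E] : Measure E :=
  volume.withDensity fun x => ENNReal.ofReal
    (Real.exp (-‖x‖ ^ 2) / √Real.pi ^ Module.finrank ℝ E)

lemma radialGaussian_real_apply {S : Set E} (hS : MeasurableSet S) :
    (radialGaussian E).real S =
      (∫ x in S, Real.exp (-‖x‖ ^ 2)) / √Real.pi ^ Module.finrank ℝ E := by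
  rw [measureReal_def, radialGaussian, withDensity_apply _ hS, ← integral_div,
    integral_eq_lintegral_of_nonneg_ae (ae_of_all _ fun x => by positivity) (by fun_prop)]

instance : IsProbabilityMeasure (radialGaussian E) := by
  have hgauss : ∫ x : E, Real.exp (-‖x‖ ^ 2) = √Real.pi ^ Module.finrank ℝ E := by
    simpa [Real.sqrt_eq_rpow, ← Real.rpow_mul_natCast Real.pi_nonneg, div_eq_inv_mul] using
      GaussianFourier.integral_rexp_neg_mul_sq_norm (V := E) one_pos
  have h := radialGaussian_real_apply (E := E) MeasurableSet.univ
  rw [setIntegral_univ, hgauss, div_self (by positivity), measureReal_def] at h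
  exact ⟨(ENNReal.toReal_eq_one_iff _).1 h⟩

lemma radialGaussian_map_isometry (L : E ≃ₗᵢ[ℝ] E) :
    (radialGaussian E).map L = radialGaussian E := by
  ext S hS
  have hL : Measurable L := L.continuous.measurable
  rw [Measure.map_apply hL hS, radialGaussian, withDensity_apply _ hS, withDensity_apply _ (hL hS),
    ← L.measurePreserving.setLIntegral_comp_preimage hS (by fun_prop)]
  simp only [L.norm_map]

lemma ae_ne_zero_radialGaussian [Nontrivial E] : ∀ᵐ x ∂radialGaussian E, x ≠ 0 :=
  (withDensity_absolutelyContinuous _ _).ae_le (Measure.ae_ne volume 0)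

lemma isSphereUniform_map_normalize_radialGaussian [Nontrivial E] :
    IsSphereUniform ((radialGaussian E).map fun x => ‖x‖⁻¹ • x) where
  isProbabilityMeasure := Measure.isProbabilityMeasure_map (by fun_prop)
  map_isometry L := by
    have hL : Measurable L := L.continuous.measurable
    conv_rhs => rw [← radialGaussian_map_isometry L, Measure.map_map (by fun_prop) hL]
    rw [Measure.map_map hL (by fun_prop)]
    congr 1
    ext x
    simp
  ae_norm_eq_one := by
    rw [ae_map_iff (by fun_prop) (measurableSet_eq_fun (by fun_prop) (by fun_prop))]
    filter_upwards [ae_ne_zero_radialGaussian] with x hx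
    rw [norm_smul, norm_inv, norm_norm, inv_mul_cancel₀ (norm_ne_zero_iff.2 hx)]

variable {ι : Type*} [Fintype ι]

lemma setIntegral_exp_neg_norm_sq_eq_gaussianCone (c : ι → ℝ) (q : ℝ) (p : ι → Prop)
    [DecidablePred p] (hp : ∀ i, p i → c i = 0) :
    ∫ x : EuclideanSpace ℝ ι in {x | ∑ i, c i * x i ^ 2 < q * ‖x‖ ^ 2}, Real.exp (-‖x‖ ^ 2) =
      gaussianCone {i // p i} (fun j : {i // ¬ p i} => c j) q := by
  have hsplit (f : ι → ℝ) : ∑ i, f i = ∑ i : {i // p i}, f i + ∑ i : {i // ¬ p i}, f i :=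
    (Fintype.sum_subtype_add_sum_subtype p f).symm
  have hzero (x : EuclideanSpace ℝ ι) : ∑ i : {i // p i}, c i * x i ^ 2 = 0 :=
    Finset.sum_eq_zero fun i _ => by rw [hp i i.2, zero_mul]
  have hmp := (volume_preserving_piEquivPiSubtypeProd (fun _ : ι => ℝ) p).comp
    (PiLp.volume_preserving_ofLp ι)
  rw [gaussianCone, ← hmp.setIntegral_preimage_emb
    ((MeasurableEquiv.measurableEmbedding _).comp
      (MeasurableEquiv.toLp 2 (ι → ℝ)).symm.measurableEmbedding)]
  simp only [EuclideanSpace.real_norm_sq_eq, hsplit, hzero, zero_add]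
  rfl

namespace IsSphereUniform

lemma measureReal_sum_mul_sq_lt [Nonempty ι] {μ : Measure (EuclideanSpace ℝ ι)}
    (hμ : IsSphereUniform μ) (c : ι → ℝ) (q : ℝ) :
    μ.real {x | ∑ i, c i * x i ^ 2 < q} =
      (∫ x : EuclideanSpace ℝ ι in {x | ∑ i, c i * x i ^ 2 < q * ‖x‖ ^ 2},
        Real.exp (-‖x‖ ^ 2)) / √Real.pi ^ Fintype.card ι := by
  rw [← finrank_euclideanSpace (𝕜 := ℝ) (ι := ι),
    ← radialGaussian_real_apply (measurableSet_lt (by fun_prop) (by fun_prop)),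
    hμ.eq isSphereUniform_map_normalize_radialGaussian,
    map_measureReal_apply (by fun_prop) (measurableSet_lt (by fun_prop) (by fun_prop))]
  refine measureReal_congr ?_
  filter_upwards [ae_ne_zero_radialGaussian] with x hx
  have hpos : 0 < ‖x‖ ^ 2 := by positivity
  have hsum : ∑ i, c i * (‖x‖⁻¹ * x i) ^ 2 = (∑ i, c i * x i ^ 2) / ‖x‖ ^ 2 := by
    rw [Finset.sum_div]
    exact Finset.sum_congr rfl fun i _ => by ring
  refine propext ?_
  change (∑ i, c i * (‖x‖⁻¹ * x i) ^ 2 < q) ↔ (∑ i, c i * x i ^ 2 < q * ‖x‖ ^ 2)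
  rw [hsum, div_lt_iff₀ hpos]

lemma tendsto_measureReal_sum_mul_sq_lt {μ : Measure (EuclideanSpace ℝ ι)}
    (hμ : IsSphereUniform μ) {c : ι → ℝ} (hc : ∀ i, 0 ≤ c i) (p : ι → Prop) [DecidablePred p]
    (hp : ∀ i, p i ↔ c i = 0) [Nonempty {i // p i}] :
    Tendsto (fun q => μ.real {x | ∑ i, c i * x i ^ 2 < q} /
        q ^ (Fintype.card {i // ¬ p i} / 2 : ℝ)) (𝓝[>] 0)
      (𝓝 ((∏ j : {i // ¬ p i}, c j ^ (-(1 / 2) : ℝ)) *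
        (Real.Gamma (Fintype.card ι / 2) / (Real.Gamma (Fintype.card {i // p i} / 2) *
          Real.Gamma (Fintype.card {i // ¬ p i} / 2 + 1))))) := by
  have : Nonempty ι := ‹Nonempty {i // p i}›.map Subtype.val
  have hcard : Fintype.card {i // p i} + Fintype.card {i // ¬ p i} = Fintype.card ι := by
    rw [← Fintype.card_sum, Fintype.card_congr (Equiv.sumCompl p)]
  have hpos : ∀ j : {i // ¬ p i}, 0 < c j := fun j =>
    (hc j).lt_of_ne' fun h => j.2 ((hp j).2 h)
  have hlim := (tendsto_gaussianCone_div_rpow (I := {i // p i}) hpos).div_const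
    (√Real.pi ^ Fintype.card ι)
  rw [hcard, ← Nat.cast_add, hcard] at hlim
  have hpi : √Real.pi ^ Fintype.card ι ≠ 0 := by positivity
  refine Tendsto.congr (fun q => ?_) (hlim.trans_eq (congrArg 𝓝 ?_))
  · rw [hμ.measureReal_sum_mul_sq_lt, setIntegral_exp_neg_norm_sq_eq_gaussianCone c q p
      fun i => (hp i).1, div_right_comm]
  · field_simp

end IsSphereUniform

end SphereUniform

section Elliptical

lemma eNorm_eq_norm_toLp {d : ℕ} (x : Fin d → ℝ) : eNorm x = ‖WithLp.toLp 2 x‖ := by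
  simp [eNorm, EuclideanSpace.norm_eq]

lemma eNorm_nonneg {d : ℕ} (x : Fin d → ℝ) : 0 ≤ eNorm x := Real.sqrt_nonneg _

lemma exists_orthogonal_mulVec_eq {ι : Type*} [Fintype ι] [DecidableEq ι]
    (L : EuclideanSpace ℝ ι ≃ₗᵢ[ℝ] EuclideanSpace ℝ ι) :
    ∃ M : Matrix ι ι ℝ, M * Mᵀ = 1 ∧ ∀ x : ι → ℝ, WithLp.toLp 2 (M *ᵥ x) = L (WithLp.toLp 2 x) := by
  set e := EuclideanSpace.basisFun ι ℝ
  refine ⟨LinearMap.toMatrix e.toBasis e.toBasis L.toLinearEquiv.toLinearMap, ?_, fun x => ?_⟩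
  · rw [← Matrix.conjTranspose_eq_transpose_of_trivial, ← Matrix.star_eq_conjTranspose]
    exact Matrix.mem_unitaryGroup_iff.1 (L.toMatrix_mem_unitaryGroup e e)
  · have hrepr (y : EuclideanSpace ℝ ι) : ⇑(e.toBasis.repr y) = y.ofLp := by
      ext i
      simp [e]
    have h := LinearMap.toMatrix_mulVec_repr e.toBasis e.toBasis L.toLinearEquiv.toLinearMap
      (WithLp.toLp 2 x)
    rw [hrepr, hrepr] at h
    rw [h]
    rfl

/-- The relative deficit of `‖A v‖²` below the level `L`. -/
def normDeficit {k d : ℕ} (A : Matrix (Fin k) (Fin d) ℝ) (L : ℝ) (v : Fin d → ℝ) : ℝ :=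
  1 - eNorm (A *ᵥ v) ^ 2 / L

variable {k d : ℕ} {A : Matrix (Fin k) (Fin d) ℝ} {lam : Fin d → ℝ} {L : ℝ}

lemma measurable_normDeficit : Measurable (normDeficit A L) := by
  refine Continuous.measurable ?_
  unfold normDeficit eNorm
  fun_prop

lemma mul_sqrt_lt_eNorm_mulVec_smul_iff {u r : ℝ} {v : Fin d → ℝ} (hr : 0 < r) (hu : 0 ≤ u)
    (hL : 0 < L) :
    u * √L < eNorm (A *ᵥ (r • v)) ↔ normDeficit A L v < relExcess u r := by
  have hsq : eNorm (A *ᵥ (r • v)) ^ 2 = r ^ 2 * eNorm (A *ᵥ v) ^ 2 := by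
    rw [Matrix.mulVec_smul, eNorm_eq_norm_toLp, eNorm_eq_norm_toLp, WithLp.toLp_smul, norm_smul,
      mul_pow, Real.norm_eq_abs, sq_abs]
  rw [← sq_lt_sq₀ (by positivity) (eNorm_nonneg _), hsq, mul_pow, Real.sq_sqrt hL.le, normDeficit,
    relExcess, sub_lt_sub_iff_left, div_lt_div_iff₀ (by positivity) hL, mul_comm (r ^ 2)]

lemma exists_isometry_eNorm_mulVec_sq_eq (hH : (Aᵀ * A).IsHermitian) (σ : Equiv.Perm (Fin d)) :
    ∃ T : EuclideanSpace ℝ (Fin d) ≃ₗᵢ[ℝ] EuclideanSpace ℝ (Fin d), ∀ x : Fin d → ℝ,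
      eNorm (A *ᵥ x) ^ 2 = ∑ i, hH.eigenvalues (σ i) * T (WithLp.toLp 2 x) i ^ 2 := by
  set b := hH.eigenvectorBasis.reindex σ.symm with hb
  refine ⟨b.repr, fun x => ?_⟩
  have heigen (i : Fin d) : (Aᵀ * A) *ᵥ (b i).ofLp = hH.eigenvalues (σ i) • (b i).ofLp := by
    simpa [hb] using hH.mulVec_eigenvectorBasis (σ i)
  have hcoord (i : Fin d) : x ⬝ᵥ (b i).ofLp = b.repr (WithLp.toLp 2 x) i := by
    rw [b.repr_apply_apply, EuclideanSpace.inner_eq_star_dotProduct, star_trivial]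
  have hexpand : x = ∑ i, b.repr (WithLp.toLp 2 x) i • (b i).ofLp := by
    simpa using congrArg WithLp.ofLp (b.sum_repr (WithLp.toLp 2 x)).symm
  calc eNorm (A *ᵥ x) ^ 2 = x ⬝ᵥ ((Aᵀ * A) *ᵥ x) := by
        rw [← Matrix.mulVec_mulVec, Matrix.dotProduct_mulVec, Matrix.vecMul_transpose, eNorm,
          Real.sq_sqrt (by positivity)]
        simp [dotProduct, pow_two]
    _ = x ⬝ᵥ ∑ i, b.repr (WithLp.toLp 2 x) i • (hH.eigenvalues (σ i) • (b i).ofLp) := by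
        conv_lhs => rw [hexpand, Matrix.mulVec_sum, ← hexpand]
        simp_rw [Matrix.mulVec_smul, heigen]
    _ = ∑ i, hH.eigenvalues (σ i) * b.repr (WithLp.toLp 2 x) i ^ 2 := by
        rw [dotProduct_sum]
        refine Finset.sum_congr rfl fun i _ => ?_
        rw [dotProduct_smul, dotProduct_smul, hcoord, smul_eq_mul, smul_eq_mul]
        ring

lemma normDeficit_eq_sum {T : EuclideanSpace ℝ (Fin d) ≃ₗᵢ[ℝ] EuclideanSpace ℝ (Fin d)}
    (hT : ∀ x : Fin d → ℝ, eNorm (A *ᵥ x) ^ 2 = ∑ i, lam i * T (WithLp.toLp 2 x) i ^ 2)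
    {v : Fin d → ℝ} (hv : eNorm v = 1) :
    normDeficit A L v = ∑ i, (1 - lam i / L) * T (WithLp.toLp 2 v) i ^ 2 := by
  have hnorm : ∑ i, T (WithLp.toLp 2 v) i ^ 2 = 1 := by
    rw [← EuclideanSpace.real_norm_sq_eq, T.norm_map, ← eNorm_eq_norm_toLp, hv, one_pow]
  simp only [normDeficit, hT, sub_mul, one_mul, Finset.sum_sub_distrib, hnorm, Finset.sum_div]
  congr 1
  exact Finset.sum_congr rfl fun i _ => by ring

lemma normDeficit_nonneg {T : EuclideanSpace ℝ (Fin d) ≃ₗᵢ[ℝ] EuclideanSpace ℝ (Fin d)}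
    (hT : ∀ x : Fin d → ℝ, eNorm (A *ᵥ x) ^ 2 = ∑ i, lam i * T (WithLp.toLp 2 x) i ^ 2)
    (hle : ∀ i, lam i ≤ L) (hL : 0 < L) {v : Fin d → ℝ} (hv : eNorm v = 1) :
    0 ≤ normDeficit A L v := by
  rw [normDeficit_eq_sum hT hv]
  exact Finset.sum_nonneg fun i _ =>
    mul_nonneg (sub_nonneg.2 ((div_le_one hL).2 (hle i))) (sq_nonneg _)

variable {Ω : Type*} [MeasurableSpace Ω] {P : Measure Ω} {R : Ω → ℝ} {U : Ω → Fin d → ℝ}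

lemma measureReal_lt_eq_integral [IsFiniteMeasure P] {Y S : Ω → ℝ} (hY : Measurable Y)
    (hS : Measurable S) (hYS : IndepFun Y S P) :
    P.real {ω | S ω < Y ω} = ∫ ω, P.real {ω' | S ω' < Y ω} ∂P := by
  have hlt : MeasurableSet {z : ℝ × ℝ | z.2 < z.1} := measurableSet_lt measurable_snd measurable_fst
  have hjoint : P {ω | S ω < Y ω} = ∫⁻ ω, P {ω' | S ω' < Y ω} ∂P := by
    change P ((fun ω => (Y ω, S ω)) ⁻¹' {z | z.2 < z.1}) = _
    rw [← Measure.map_apply (hY.prodMk hS) hlt,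
      (indepFun_iff_map_prod_eq_prod_map_map hY.aemeasurable hS.aemeasurable).1 hYS,
      Measure.prod_apply hlt, lintegral_map (measurable_measure_prodMk_left hlt) hY]
    exact lintegral_congr fun ω => Measure.map_apply hS measurableSet_Iio
  have hmono : Monotone fun y => P {ω | S ω < y} := fun a b hab =>
    measure_mono fun ω h => lt_of_lt_of_le h hab
  simp only [measureReal_def]
  rw [hjoint]
  exact (integral_toReal (hmono.measurable.comp hY).aemeasurable
    (ae_of_all _ fun ω => measure_lt_top _ _)).symm

lemma measureReal_mul_sqrt_lt_eNorm_eq_setIntegral [IsFiniteMeasure P] (hR : Measurable R)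
    (hRpos : ∀ ω, 0 < R ω) (hUm : Measurable U) (hind : IndepFun R U P) (hL : 0 < L)
    (hdef : ∀ ω, 0 ≤ normDeficit A L (U ω)) {u : ℝ} (hu : 0 ≤ u) :
    P.real {ω | u * √L < eNorm (A *ᵥ (R ω • U ω))} = ∫ ω in {ω | u < R ω},
      P.real {ω' | normDeficit A L (U ω') < relExcess u (R ω)} ∂P := by
  have hev : {ω | u * √L < eNorm (A *ᵥ (R ω • U ω))} =
      {ω | normDeficit A L (U ω) < relExcess u (R ω)} :=
    Set.ext fun ω => mul_sqrt_lt_eNorm_mulVec_smul_iff (hRpos ω) hu hL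
  rw [hev]
  refine (measureReal_lt_eq_integral ((measurable_relExcess u).comp hR)
    (measurable_normDeficit.comp hUm)
    (hind.comp (measurable_relExcess u) measurable_normDeficit)).trans
    (setIntegral_eq_integral_of_forall_compl_eq_zero fun ω hω => ?_).symm
  have hle : relExcess u (R ω) ≤ 0 := by
    rw [relExcess, sub_nonpos, one_le_div (pow_pos (hRpos ω) 2)]
    exact pow_le_pow_left₀ (hRpos ω).le (not_lt.1 hω) 2
  have hempty : {ω' | normDeficit A L (U ω') < relExcess u (R ω)} = ∅ :=
    Set.eq_empty_of_forall_notMem fun ω' h => (hle.trans (hdef ω')).not_gt h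
  exact (congrArg P.real hempty).trans measureReal_empty

variable [IsProbabilityMeasure P]

lemma IsUniformOnSphere.isSphereUniform_map_toLp (hU : IsUniformOnSphere P U) :
    IsSphereUniform (P.map fun ω => WithLp.toLp 2 (U ω)) := by
  obtain ⟨hUm, hnorm, horth⟩ := hU
  have htoLp : Measurable (WithLp.toLp 2 : (Fin d → ℝ) → EuclideanSpace ℝ (Fin d)) := by fun_prop
  refine ⟨Measure.isProbabilityMeasure_map (by fun_prop), fun T => ?_, ?_⟩
  · obtain ⟨M, hM, hMT⟩ := exists_orthogonal_mulVec_eq T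
    have hMm : Measurable fun ω => M *ᵥ U ω :=
      (Continuous.matrix_mulVec continuous_const continuous_id).measurable.comp hUm
    have hT : (fun ω => T (WithLp.toLp 2 (U ω))) = WithLp.toLp 2 ∘ fun ω => M *ᵥ U ω :=
      funext fun ω => (hMT (U ω)).symm
    rw [Measure.map_map T.continuous.measurable (by fun_prop)]
    change P.map (fun ω => T (WithLp.toLp 2 (U ω))) = P.map (WithLp.toLp 2 ∘ U)
    rw [hT, ← Measure.map_map htoLp hMm, ← Measure.map_map htoLp hUm, horth M hM]
  · rw [ae_map_iff (by fun_prop) (measurableSet_eq_fun (by fun_prop) (by fun_prop))]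
    exact ae_of_all _ fun ω => by rw [← eNorm_eq_norm_toLp, hnorm]

lemma IsUniformOnSphere.measureReal_normDeficit_lt (hU : IsUniformOnSphere P U)
    {T : EuclideanSpace ℝ (Fin d) ≃ₗᵢ[ℝ] EuclideanSpace ℝ (Fin d)}
    (hT : ∀ x : Fin d → ℝ, eNorm (A *ᵥ x) ^ 2 = ∑ i, lam i * T (WithLp.toLp 2 x) i ^ 2) (q : ℝ) :
    P.real {ω | normDeficit A L (U ω) < q} = (P.map fun ω => WithLp.toLp 2 (U ω)).real
      {x : EuclideanSpace ℝ (Fin d) | ∑ i, (1 - lam i / L) * x i ^ 2 < q} := by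
  have hUm : Measurable fun ω => (WithLp.toLp 2 (U ω) : EuclideanSpace ℝ (Fin d)) :=
    (by fun_prop : Measurable (WithLp.toLp 2 : (Fin d → ℝ) → EuclideanSpace ℝ (Fin d))).comp hU.1
  have hTm : Measurable T := T.continuous.measurable
  rw [← hU.isSphereUniform_map_toLp.map_isometry T, Measure.map_map hTm hUm,
    map_measureReal_apply (hTm.comp hUm) (measurableSet_lt (by fun_prop) (by fun_prop))]
  simp only [normDeficit_eq_sum hT (hU.2.1 _)]
  rfl

lemma IsUniformOnSphere.tendsto_measureReal_normDeficit_lt [NeZero d] (hU : IsUniformOnSphere P U)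
    {T : EuclideanSpace ℝ (Fin d) ≃ₗᵢ[ℝ] EuclideanSpace ℝ (Fin d)}
    (hT : ∀ x : Fin d → ℝ, eNorm (A *ᵥ x) ^ 2 = ∑ i, lam i * T (WithLp.toLp 2 x) i ^ 2)
    (hmax : ∀ i, lam i ≤ lam 0) (hpos : 0 < lam 0) {m : ℕ}
    (hm : m = (Finset.univ.filter fun j => lam j = lam 0).card) :
    Tendsto (fun q => P.real {ω | normDeficit A (lam 0) (U ω) < q} / q ^ ((d - m : ℝ) / 2)) (𝓝[>] 0)
      (𝓝 ((∏ j ∈ Finset.univ.filter (fun j => lam j ≠ lam 0),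
          (1 - lam j / lam 0) ^ (-(1 / 2) : ℝ)) *
        (Real.Gamma (d / 2) / (Real.Gamma (m / 2) * Real.Gamma ((d - m) / 2 + 1))))) := by
  have hzero (i : Fin d) : lam i = lam 0 ↔ 1 - lam i / lam 0 = 0 := by
    rw [sub_eq_zero, eq_comm (a := (1 : ℝ)), div_eq_one_iff_eq hpos.ne']
  have hnonneg (i : Fin d) : 0 ≤ 1 - lam i / lam 0 := by
    rw [sub_nonneg, div_le_one hpos]
    exact hmax i
  have hcard : Fintype.card {i // lam i = lam 0} = m := by rw [Fintype.card_subtype, hm]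
  have hmd : m ≤ d := by
    rw [hm]
    exact Finset.card_le_univ _ |>.trans_eq (Fintype.card_fin d)
  have hcompl : (Fintype.card {i // ¬ lam i = lam 0} : ℝ) = d - m := by
    rw [Fintype.card_subtype_compl, hcard, Fintype.card_fin, Nat.cast_sub hmd]
  have : Nonempty {i // lam i = lam 0} := ⟨⟨0, rfl⟩⟩
  have hlim := hU.isSphereUniform_map_toLp.tendsto_measureReal_sum_mul_sq_lt hnonneg _ hzero
  rw [hcard, hcompl, Fintype.card_fin] at hlim
  simp_rw [hU.measureReal_normDeficit_lt hT]
  rwa [Finset.prod_subtype (p := fun j => ¬ lam j = lam 0) _ (by simp)]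

lemma IsUniformOnSphere.tendsto_measureReal_mul_sqrt_lt_eNorm [NeZero d]
    (hU : IsUniformOnSphere P U) (hR : Measurable R) (hRpos : ∀ ω, 0 < R ω)
    (hind : IndepFun R U P) {w : ℝ → ℝ} {x : EReal} (htail : IsGumbelTail (survival P R) w x)
    {T : EuclideanSpace ℝ (Fin d) ≃ₗᵢ[ℝ] EuclideanSpace ℝ (Fin d)}
    (hT : ∀ x : Fin d → ℝ, eNorm (A *ᵥ x) ^ 2 = ∑ i, lam i * T (WithLp.toLp 2 x) i ^ 2)
    (hmax : ∀ i, lam i ≤ lam 0) (hpos : 0 < lam 0) {m : ℕ}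
    (hm : m = (Finset.univ.filter fun j => lam j = lam 0).card) :
    Tendsto (fun u => P.real {ω | u * √(lam 0) < eNorm (A *ᵥ (R ω • U ω))} /
        ((2 / (u * w u)) ^ ((d - m : ℝ) / 2) * survival P R u)) (realNhdsLT x)
      (𝓝 ((∏ j ∈ Finset.univ.filter (fun j => lam j ≠ lam 0),
          (1 - lam j / lam 0) ^ (-(1 / 2) : ℝ)) * (Real.Gamma (d / 2) / Real.Gamma (m / 2)))) := by
  have hmd : (m : ℝ) ≤ d := by
    rw [hm]
    exact_mod_cast (Finset.card_le_univ _).trans_eq (Fintype.card_fin d)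
  have hp : 0 ≤ ((d : ℝ) - m) / 2 := by linarith
  have hGmono : Monotone fun q => P.real {ω | normDeficit A (lam 0) (U ω) < q} :=
    fun a b hab => measureReal_mono fun ω h => lt_of_lt_of_le h hab
  have hlim := htail.tendsto_setIntegral_relExcess hR hp hGmono.measurable (B := 1)
    (fun q => (abs_of_nonneg measureReal_nonneg).trans_le measureReal_le_one)
    (hU.tendsto_measureReal_normDeficit_lt hT hmax hpos hm)
  have hΓ : Real.Gamma (((d : ℝ) - m) / 2 + 1) ≠ 0 := (Real.Gamma_pos_of_pos (by linarith)).ne'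
  refine (hlim.congr' ?_).trans_eq (congrArg 𝓝 ?_)
  · filter_upwards [htail.eventually_arg_pos] with u hu
    rw [measureReal_mul_sqrt_lt_eNorm_eq_setIntegral hR hRpos hU.1 hind hpos
      (fun ω => normDeficit_nonneg hT hmax hpos (hU.2.1 ω)) hu.le]
  · rw [mul_assoc, ← div_div, div_mul_cancel₀ _ hΓ]

end Elliptical

section GumbelTail

variable {Ω : Type*} [MeasurableSpace Ω] {P : Measure Ω} {R : Ω → ℝ} {x : EReal}

lemma one_sub_measureReal_le_eq_survival [IsProbabilityMeasure P] (hR : Measurable R) (u : ℝ) :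
    1 - P.real {ω | R ω ≤ u} = survival P R u := by
  rw [survival, ← probReal_compl_eq_one_sub (measurableSet_le hR measurable_const)]
  congr 1
  ext ω
  simp

lemma endpoint_pos_of_isLUB [IsFiniteMeasure P] [NeZero P] (hRpos : ∀ ω, 0 < R ω)
    (hx : IsLUB (Real.toEReal '' {u | 0 < survival P R u}) x) : 0 < x := by
  have hcover : P (⋃ n : ℕ, {ω | 1 / (n + 1 : ℝ) < R ω}) ≠ 0 := by
    have huniv : ⋃ n : ℕ, {ω | 1 / (n + 1 : ℝ) < R ω} = Set.univ :=
      Set.iUnion_eq_univ_iff.2 fun ω => exists_nat_one_div_lt (hRpos ω)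
    rw [huniv]
    exact Measure.measure_univ_ne_zero.2 (NeZero.ne P)
  obtain ⟨n, hn⟩ := exists_measure_pos_of_not_measure_iUnion_null hcover
  have hmem : 1 / (n + 1 : ℝ) ∈ {u | 0 < survival P R u} :=
    ENNReal.toReal_pos hn.ne' (measure_ne_top _ _)
  exact (EReal.coe_pos.2 Nat.one_div_pos_of_nat).trans_le (hx.1 ⟨_, hmem, rfl⟩)

lemma isGumbelTail_survival [IsFiniteMeasure P] [NeZero P] (hRpos : ∀ ω, 0 < R ω) {w : ℝ → ℝ}
    (hx : IsLUB (Real.toEReal '' {u | 0 < survival P R u}) x) (hw : ∀ u, 0 < w u)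
    (hratio : ∀ t, Tendsto (fun u => survival P R (u + t / w u) / survival P R u) (realNhdsLT x)
      (𝓝 (Real.exp (-t)))) :
    IsGumbelTail (survival P R) w x where
  antitone _ _ huv := measureReal_mono fun _ h => huv.trans_lt h
  nonneg _ := measureReal_nonneg
  isLUB := hx
  endpoint_pos := endpoint_pos_of_isLUB hRpos hx
  scale_pos := hw
  tendsto_ratio := hratio

lemma exists_eq_realNhdsLT_and_isLUB {F : ℝ → ℝ} {l : Filter ℝ}
    (hl : (l = atTop ∧ ∀ u, F u < 1) ∨ (l = 𝓝[<] (1 : ℝ) ∧ IsLUB {u | F u < 1} 1)) :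
    ∃ x : EReal, l = realNhdsLT x ∧ IsLUB (Real.toEReal '' {u | F u < 1}) x := by
  rcases hl with ⟨rfl, hF⟩ | ⟨rfl, hF⟩
  · refine ⟨⊤, realNhdsLT_top.symm, fun _ _ => le_top, fun b hb => ?_⟩
    refine ((EReal.eq_top_iff_forall_lt b).2 fun u => ?_).ge
    exact (EReal.coe_lt_coe_iff.2 (lt_add_one u)).trans_le (hb ⟨u + 1, hF _, rfl⟩)
  · refine ⟨(1 : ℝ), (realNhdsLT_coe 1).symm, ?_⟩
    refine ⟨fun _ ⟨u, hu, hux⟩ => hux ▸ EReal.coe_le_coe_iff.2 (hF.1 hu), fun b hb => ?_⟩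
    refine le_of_forall_lt fun c hc => ?_
    obtain ⟨v, hcv, hv⟩ := EReal.lt_iff_exists_real_btwn.1 hc
    obtain ⟨u, hu, hvu⟩ := (lt_isLUB_iff hF).1 (EReal.coe_lt_coe_iff.1 hv)
    exact hcv.trans ((EReal.coe_lt_coe_iff.2 hvu).trans_le (hb ⟨u, hu, rfl⟩))

end GumbelTail

/-- The theorem for an arbitrary upper endpoint and a rectangular matrix, where the role of the
eigenvalues of `A * Aᵀ` is played by those of `Aᵀ * A`. -/
theorem norm_elliptical_tail_gumbel_general
    {Ω : Type*} [MeasurableSpace Ω] (P : Measure Ω) [IsProbabilityMeasure P]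
    (k d : ℕ) [NeZero d] (A : Matrix (Fin k) (Fin d) ℝ) (R : Ω → ℝ) (U : Ω → Fin d → ℝ)
    (hRmeas : Measurable R) (hRpos : ∀ ω, 0 < R ω) (hU : IsUniformOnSphere P U)
    (hInd : IndepFun R U P) (X : Ω → Fin k → ℝ) (hX : ∀ ω, X ω = A.mulVec (R ω • U ω))
    (F : ℝ → ℝ) (hF : ∀ u, F u = (P {ω | R ω ≤ u}).toReal)
    (lam : Fin d → ℝ) (hmax : ∀ i, lam i ≤ lam 0)
    (hlam : ∃ (hH : (Aᵀ * A).IsHermitian) (σ : Equiv.Perm (Fin d)),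
      ∀ i, lam i = hH.eigenvalues (σ i))
    (hlam0 : 0 < lam 0)
    (m : ℕ) (hm : m = (Finset.univ.filter fun j => lam j = lam 0).card)
    (Cstar : ℝ)
    (hC : Cstar = ∏ j ∈ Finset.univ.filter (fun j => lam j ≠ lam 0),
      ((1 : ℝ) - lam j / lam 0) ^ (-(1 / 2 : ℝ)))
    (xF : EReal) (hxF : IsLUB (Real.toEReal '' {u | F u < 1}) xF)
    (w : ℝ → ℝ) (hw : ∀ u, 0 < w u)
    (hMDA : ∀ x : ℝ, Tendsto (fun u => (1 - F (u + x / w u)) / (1 - F u)) (realNhdsLT xF)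
      (𝓝 (Real.exp (-x)))) :
    Tendsto (fun u =>
        (P {ω | eNorm (X ω) > u * Real.sqrt (lam 0)}).toReal /
          (Cstar * (Real.Gamma ((d : ℝ) / 2) / Real.Gamma ((m : ℝ) / 2)) *
            (2 / (u * w u)) ^ (((d : ℝ) - (m : ℝ)) / 2) * (1 - F u)))
      (realNhdsLT xF) (𝓝 1) := by
  obtain ⟨hH, σ, hlam⟩ := hlam
  obtain ⟨T, hT⟩ := exists_isometry_eNorm_mulVec_sq_eq hH σ
  simp_rw [← hlam] at hT
  obtain rfl : X = fun ω => A *ᵥ (R ω • U ω) := funext hX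
  have hFsurv (u : ℝ) : 1 - F u = survival P R u := by
    rw [hF]
    exact one_sub_measureReal_le_eq_survival hRmeas u
  have htail : IsGumbelTail (survival P R) w xF := by
    refine isGumbelTail_survival hRpos ?_ hw ?_
    · simpa only [← hFsurv, sub_pos] using hxF
    · simpa only [hFsurv] using hMDA
  have hm0 : 0 < m := hm ▸ Finset.card_pos.2 ⟨0, by simp⟩
  have hd0 : 0 < d := NeZero.pos d
  have hCstar : 0 < Cstar := by
    refine hC ▸ Finset.prod_pos fun j hj => Real.rpow_pos_of_pos ?_ _
    exact sub_pos.2 ((div_lt_one hlam0).2 ((hmax j).lt_of_ne (Finset.mem_filter.1 hj).2))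
  have hconst : Cstar * (Real.Gamma (d / 2) / Real.Gamma (m / 2)) ≠ 0 := by positivity
  have hlim := hU.tendsto_measureReal_mul_sqrt_lt_eNorm hRmeas hRpos hInd htail hT hmax hlam0 hm
  rw [← hC] at hlim
  refine ((hlim.div_const _).congr fun u => ?_).trans_eq (congrArg 𝓝 (div_self hconst))
  rw [hFsurv, div_div, measureReal_def, mul_assoc _ _ (survival P R u),
    mul_comm (_ * survival P R u)]

/-- Theorem 1 (Gumbel case): tail asymptotics of the norm of an elliptical random vector. -/
theorem norm_elliptical_tail_gumbel
    {Ω : Type*} [MeasurableSpace Ω] (P : Measure Ω) [IsProbabilityMeasure P]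
    (d : ℕ) [NeZero d] (hd : 2 ≤ d)
    (A : Matrix (Fin d) (Fin d) ℝ)
    (R : Ω → ℝ) (U : Ω → Fin d → ℝ)
    (hRmeas : Measurable R) (hRpos : ∀ ω, 0 < R ω)
    (hU : IsUniformOnSphere P U)
    (hInd : IndepFun R U P)
    (X : Ω → Fin d → ℝ) (hX : ∀ ω, X ω = A.mulVec (R ω • U ω))
    -- `F` is the distribution function of `R`
    (F : ℝ → ℝ) (hF : ∀ u, F u = (P {ω | R ω ≤ u}).toReal) (hF0 : F 0 = 0)
    -- `lam` enumerates the eigenvalues of `Σ = A Aᵀ` in decreasing order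
    (lam : Fin d → ℝ) (hmono : Antitone lam)
    (hlam : ∃ (hH : (A * Aᵀ).IsHermitian) (σ : Equiv.Perm (Fin d)),
      ∀ i, lam i = hH.eigenvalues (σ i))
    (hlam0 : 0 < lam 0)
    -- `m` is the multiplicity of the largest eigenvalue `lam 0 = λ_(m)`
    (m : ℕ) (hm : m = (Finset.univ.filter fun j => lam j = lam 0).card)
    (Cstar : ℝ)
    (hC : Cstar = ∏ j ∈ Finset.univ.filter (fun j => lam j ≠ lam 0),
      ((1 : ℝ) - lam j / lam 0) ^ (-(1 / 2 : ℝ)))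
    -- `l` is the filter `u ↑ x_F`, where the upper endpoint `x_F` of `F` is `∞` or `1`
    (l : Filter ℝ)
    (hxF : (l = atTop ∧ ∀ u, F u < 1) ∨ (l = 𝓝[<] (1 : ℝ) ∧ IsLUB {u | F u < 1} 1))
    -- `F ∈ MDA(Λ, w)` with positive scaling function `w`
    (w : ℝ → ℝ) (hw : ∀ u, 0 < w u)
    (hMDA : ∀ x : ℝ,
      Tendsto (fun u => (1 - F (u + x / w u)) / (1 - F u)) l (𝓝 (Real.exp (-x))))
 :
    Tendsto (fun u =>
        (P {ω | eNorm (X ω) > u * Real.sqrt (lam 0)}).toReal /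
          (Cstar * (Real.Gamma ((d : ℝ) / 2) / Real.Gamma ((m : ℝ) / 2)) *
            (2 / (u * w u)) ^ (((d : ℝ) - (m : ℝ)) / 2) * (1 - F u)))
      l (𝓝 1) := by
  obtain ⟨xF, rfl, hx⟩ := exists_eq_realNhdsLT_and_isLUB hxF
  obtain ⟨hH, σ, hσ⟩ := hlam
  have hH' : (Aᵀ * A).IsHermitian := by
    simpa using Matrix.isHermitian_conjTranspose_mul_self A
  have heig : hH.eigenvalues = hH'.eigenvalues :=
    (hH.eigenvalues_eq_eigenvalues_iff hH').2 (Matrix.charpoly_mul_comm _ _)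
  exact norm_elliptical_tail_gumbel_general P d d A R U hRmeas hRpos hU hInd X hX F hF lam
    (fun i => hmono (Fin.zero_le i)) ⟨hH', σ, heig ▸ hσ⟩ hlam0 m hm Cstar hC xF hx w hw hMDA
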